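/- arXiv:1404.5683 — 3 statements merged into one kernel-verified Lean document; each statement's English description precedes it below -/
import Mathlib

section
/- (Soft-covering lemma.) Let X and Y be finite sets and let P_{XY} be a joint probability mass function on X × Y with marginals P_X and P_Y, and conditional pmf P_{X|Y}(x|y) = P_{XY}(x,y)/P_Y(y) for y with P_Y(y) > 0. Fix R > I(X;Y), where I(X;Y) = ∑_{x,y} P_{XY}(x,y) log₂( P_{XY}(x,y) / (P_X(x) P_Y(y)) ). For each n, let the random codebook C^{(n)} consist of M_n = ⌈2^{nR}⌉ codewords Y^n(1), …, Y^n(M_n), where the codewords are mutually independent and each Y^n(m) has i.i.d. coordinates distributed according to P_Y. Let the induced output distribution on X^n be P^{C}_{X^n}(x^n) = (1/M_n) ∑_{m=1}^{M_n} ∏_{t=1}^{n} P_{X|Y}(x_t | Y_t(m)). Then the expectation over the random codebook of the total variation distance to the i.i.d. distribution vanishes: E_{C^{(n)}}[ ‖P^{C}_{X^n} − ∏_{t=1}^n P_X‖_TV ] → 0 as n → ∞. -/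
open Finset

/-- Total variation distance between two pmfs on a finite set,
`‖P − Q‖_TV = (1/2) ∑ₓ |P x − Q x|`. -/
noncomputable def tvDist {S : Type*} [Fintype S] (P Q : S → ℝ) : ℝ :=
  (1 / 2) * ∑ s, |P s - Q s|

/-- Mutual information (in bits) of a joint pmf given as `P : A → B → ℝ`:
`I = ∑_{a,b} P(a,b) log₂( P(a,b) / (P_A(a) P_B(b)) )`. -/
noncomputable def mutInf {A B : Type*} [Fintype A] [Fintype B] (P : A → B → ℝ) : ℝ :=
  ∑ a, ∑ b, P a b * Real.logb 2 (P a b / ((∑ b', P a b') * (∑ a', P a' b)))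

/-- Expectation of a product of functions of independent coordinates. -/
lemma sum_prod_mul_prod {ι A : Type*} [Fintype ι] [DecidableEq ι] [Fintype A]
    (w : A → ℝ) (h : ι → A → ℝ) :
    ∑ C : ι → A, (∏ i, w (C i)) * ∏ i, h i (C i) = ∏ i, ∑ a, w a * h i a := by
  simp [Finset.prod_univ_sum, Finset.prod_mul_distrib]

lemma sum_prod_eq_one {ι A : Type*} [Fintype ι] [DecidableEq ι] [Fintype A]
    (w : A → ℝ) (hw : ∑ a, w a = 1) : ∑ C : ι → A, ∏ i, w (C i) = 1 := by
  simpa [hw] using sum_prod_mul_prod (ι := ι) w (fun _ _ => 1)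

/-- Expectation of a function of a single coordinate. -/
lemma sum_prod_mul_apply {ι A : Type*} [Fintype ι] [DecidableEq ι] [Fintype A]
    (w : A → ℝ) (hw : ∑ a, w a = 1) (g : A → ℝ) (j : ι) :
    ∑ C : ι → A, (∏ i, w (C i)) * g (C j) = ∑ a, w a * g a := by
  have h := sum_prod_mul_prod w (fun (i : ι) a => if i = j then g a else 1)
  rw [Fintype.prod_eq_single j (fun i hi => by simp [hi, hw])] at h
  simpa using h

/-- Distinct coordinates of a centered function are uncorrelated. -/
lemma sum_prod_mul_apply_mul_apply {ι A : Type*} [Fintype ι] [DecidableEq ι] [Fintype A]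
    (w : A → ℝ) (g : A → ℝ) (hg : ∑ a, w a * g a = 0) {j k : ι} (hjk : j ≠ k) :
    ∑ C : ι → A, (∏ i, w (C i)) * (g (C j) * g (C k)) = 0 := by
  have h := sum_prod_mul_prod w
    (fun (i : ι) a => (if i = j then g a else 1) * (if i = k then g a else 1))
  rw [Finset.prod_eq_zero (Finset.mem_univ j) (by simp [hjk, hg])] at h
  simpa only [Finset.prod_mul_distrib, Finset.prod_ite_eq', Finset.mem_univ, if_true] using h

/-- Second moment of a sum of independent centered variables. -/
lemma sum_prod_mul_sum_sq {ι A : Type*} [Fintype ι] [DecidableEq ι] [Fintype A]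
    (w : A → ℝ) (hw : ∑ a, w a = 1) (g : A → ℝ) (hg : ∑ a, w a * g a = 0) :
    ∑ C : ι → A, (∏ i, w (C i)) * (∑ i, g (C i)) ^ 2
      = Fintype.card ι * ∑ a, w a * g a ^ 2 := by
  have expand : ∀ C : ι → A, (∏ i, w (C i)) * (∑ i, g (C i)) ^ 2
      = ∑ j, ∑ k, (∏ i, w (C i)) * (g (C j) * g (C k)) := by
    intro C
    rw [sq, Finset.sum_mul_sum, Finset.mul_sum]
    simp_rw [Finset.mul_sum]
  simp_rw [expand]
  rw [Finset.sum_comm]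
  have inner_sum : ∀ j : ι, ∑ C : ι → A, ∑ k, (∏ i, w (C i)) * (g (C j) * g (C k))
      = ∑ a, w a * g a ^ 2 := by
    intro j
    rw [Finset.sum_comm, Fintype.sum_eq_single j
      (fun k hk => sum_prod_mul_apply_mul_apply w g hg hk.symm)]
    simp_rw [← sq]
    exact sum_prod_mul_apply w hw (fun a => g a ^ 2) j
  simp [inner_sum]

/-- The mean absolute deviation of an empirical mean is at most its standard deviation. -/
lemma mean_abs_deviation_le_sqrt {A : Type*} [Fintype A]
    (w : A → ℝ) (hw0 : ∀ a, 0 ≤ w a) (hw : ∑ a, w a = 1) (g : A → ℝ) {M : ℕ} (hM : 0 < M) :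
    ∑ C : Fin M → A, (∏ i, w (C i)) * |(M : ℝ)⁻¹ * ∑ i, g (C i) - ∑ a, w a * g a|
      ≤ √((M : ℝ)⁻¹ * ∑ a, w a * g a ^ 2) := by
  set μ := ∑ a, w a * g a with hμ
  have hM' : (M : ℝ) ≠ 0 := by positivity
  apply Real.le_sqrt_of_sq_le
  refine (Real.pow_arith_mean_le_arith_mean_pow Finset.univ _ _
    (fun C _ => Finset.prod_nonneg fun i _ => hw0 _) (sum_prod_eq_one w hw)
    (fun C _ => abs_nonneg _) 2).trans ?_
  have centered : ∑ a, w a * (g a - μ) = 0 := by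
    simp [mul_sub, ← Finset.sum_mul, hw, ← hμ]
  have deviation : ∀ C : Fin M → A,
      (∏ i, w (C i)) * |(M : ℝ)⁻¹ * ∑ i, g (C i) - μ| ^ 2
        = ((M : ℝ)⁻¹) ^ 2 * ((∏ i, w (C i)) * (∑ i, (g (C i) - μ)) ^ 2) := by
    intro C
    rw [sq_abs, Finset.sum_sub_distrib]
    simp only [Finset.sum_const, Finset.card_univ, Fintype.card_fin, nsmul_eq_mul]
    field_simp
  simp_rw [deviation]
  rw [← Finset.mul_sum, sum_prod_mul_sum_sq w hw _ centered, Fintype.card_fin]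
  have variance_le : ∑ a, w a * (g a - μ) ^ 2 ≤ ∑ a, w a * g a ^ 2 := by
    have : ∑ a, w a * (g a - μ) ^ 2 = ∑ a, w a * g a ^ 2 - μ ^ 2 := by
      have : ∀ a, w a * (g a - μ) ^ 2
          = w a * g a ^ 2 - 2 * μ * (w a * g a) + μ ^ 2 * w a := fun a => by ring
      simp_rw [this, Finset.sum_add_distrib, Finset.sum_sub_distrib, ← Finset.mul_sum]
      rw [hw, ← hμ]
      ring
    nlinarith [sq_nonneg μ]
  calc ((M : ℝ)⁻¹) ^ 2 * (M * ∑ a, w a * (g a - μ) ^ 2)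
      = (M : ℝ)⁻¹ * ∑ a, w a * (g a - μ) ^ 2 := by field_simp
    _ ≤ _ := by gcongr

/-- The mean absolute deviation of a nonnegative empirical mean is at most twice its mean. -/
lemma mean_abs_deviation_le_two_mul {A : Type*} [Fintype A]
    (w : A → ℝ) (hw0 : ∀ a, 0 ≤ w a) (hw : ∑ a, w a = 1) (g : A → ℝ) (hg : ∀ a, 0 ≤ g a)
    {M : ℕ} (hM : 0 < M) :
    ∑ C : Fin M → A, (∏ i, w (C i)) * |(M : ℝ)⁻¹ * ∑ i, g (C i) - ∑ a, w a * g a|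
      ≤ 2 * ∑ a, w a * g a := by
  set μ := ∑ a, w a * g a with hμ
  have hμ0 : 0 ≤ μ := Finset.sum_nonneg fun a _ => mul_nonneg (hw0 a) (hg a)
  have hM' : (M : ℝ) ≠ 0 := by positivity
  calc _ ≤ ∑ C : Fin M → A, ((M : ℝ)⁻¹ * ∑ i, (∏ i, w (C i)) * g (C i)
          + (∏ i, w (C i)) * μ) := by
        refine Finset.sum_le_sum fun C _ => ?_
        have hmean : 0 ≤ (M : ℝ)⁻¹ * ∑ i, g (C i) :=
          mul_nonneg (by positivity) (Finset.sum_nonneg fun i _ => hg _)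
        have habs : |(M : ℝ)⁻¹ * ∑ i, g (C i) - μ| ≤ (M : ℝ)⁻¹ * ∑ i, g (C i) + μ :=
          abs_le.2 ⟨by linarith, by linarith⟩
        refine (mul_le_mul_of_nonneg_left habs
          (Finset.prod_nonneg fun i _ => hw0 _)).trans_eq ?_
        rw [← Finset.mul_sum]
        ring
    _ = 2 * μ := by
        rw [Finset.sum_add_distrib, ← Finset.sum_mul, sum_prod_eq_one w hw, ← Finset.mul_sum,
          Finset.sum_comm]
        simp_rw [sum_prod_mul_apply w hw g, ← hμ]
        simp only [Finset.sum_const, Finset.card_univ, Fintype.card_fin, nsmul_eq_mul]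
        field_simp
        ring

/-- One-shot soft covering: for a channel `W` with input law `q` and output law `p`, the expected
total variation distance is controlled by the threshold `τ` on the likelihood ratio `W / p` and
the probability that this ratio exceeds `τ`. -/
lemma one_shot_soft_covering {A B : Type*} [Fintype A] [Fintype B]
    (q : A → ℝ) (hq0 : ∀ a, 0 ≤ q a) (hq : ∑ a, q a = 1)
    (W : A → B → ℝ) (hW : ∀ a b, 0 ≤ W a b)
    (p : B → ℝ) (hp : ∀ b, ∑ a, q a * W a b = p b) (hp1 : ∑ b, p b = 1)
    {τ : ℝ} (hτ : 0 ≤ τ) {M : ℕ} (hM : 0 < M) :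
    ∑ C : Fin M → A, (∏ m, q (C m)) * tvDist (fun b => (M : ℝ)⁻¹ * ∑ m, W (C m) b) p
      ≤ √((M : ℝ)⁻¹ * τ) + ∑ b, ∑ a, if W a b ≤ τ * p b then 0 else q a * W a b := by
  set G : A → B → ℝ := fun a b => if W a b ≤ τ * p b then W a b else 0 with hG
  set N : A → B → ℝ := fun a b => if W a b ≤ τ * p b then 0 else W a b with hN
  have hGN : ∀ a b, W a b = G a b + N a b := by
    intro a b
    simp only [hG, hN]
    split_ifs <;> simp
  have hN0 : ∀ a b, 0 ≤ N a b := by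
    intro a b
    simp only [hN]
    split_ifs
    exacts [le_rfl, hW a b]
  have hp0 : ∀ b, 0 ≤ p b := fun b => by
    rw [← hp]; exact Finset.sum_nonneg fun a _ => mul_nonneg (hq0 a) (hW a b)
  have good : ∀ b, √((M : ℝ)⁻¹ * ∑ a, q a * G a b ^ 2) ≤ √((M : ℝ)⁻¹ * τ) * p b := by
    intro b
    have hsq : ∑ a, q a * G a b ^ 2 ≤ τ * p b ^ 2 := by
      calc ∑ a, q a * G a b ^ 2 ≤ ∑ a, q a * (τ * p b * W a b) := by
            refine Finset.sum_le_sum fun a _ => mul_le_mul_of_nonneg_left ?_ (hq0 a)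
            simp only [hG]
            split_ifs with h
            · rw [sq]; exact mul_le_mul_of_nonneg_right h (hW a b)
            · have := mul_nonneg (mul_nonneg hτ (hp0 b)) (hW a b)
              simpa using this
        _ = τ * p b * ∑ a, q a * W a b := by
            rw [Finset.mul_sum]; exact Finset.sum_congr rfl fun a _ => by ring
        _ = τ * p b ^ 2 := by rw [hp]; ring
    calc √((M : ℝ)⁻¹ * ∑ a, q a * G a b ^ 2) ≤ √((M : ℝ)⁻¹ * (τ * p b ^ 2)) := by gcongr
      _ = √((M : ℝ)⁻¹ * τ) * p b := by
          rw [← mul_assoc, Real.sqrt_mul (by positivity), Real.sqrt_sq (hp0 b)]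
  have letter : ∀ b, ∑ C : Fin M → A, (∏ m, q (C m)) * |(M : ℝ)⁻¹ * ∑ m, W (C m) b - p b|
      ≤ √((M : ℝ)⁻¹ * τ) * p b + 2 * ∑ a, q a * N a b := by
    intro b
    refine le_trans ?_ (add_le_add
      ((mean_abs_deviation_le_sqrt q hq0 hq (fun a => G a b) hM).trans (good b))
      (mean_abs_deviation_le_two_mul q hq0 hq (fun a => N a b) (fun a => hN0 a b) hM))
    rw [← Finset.sum_add_distrib]
    refine Finset.sum_le_sum fun C _ => ?_
    rw [← mul_add]
    refine mul_le_mul_of_nonneg_left ?_ (Finset.prod_nonneg fun i _ => hq0 _)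
    refine le_trans (le_of_eq ?_) (abs_add_le _ _)
    rw [← hp b]
    simp_rw [hGN, mul_add, Finset.sum_add_distrib]
    congr 1
    ring
  have hNq : ∀ a b, (if W a b ≤ τ * p b then 0 else q a * W a b) = q a * N a b := by
    intro a b
    simp only [hN]
    split_ifs <;> simp
  have total : ∑ C : Fin M → A, (∏ m, q (C m)) *
      tvDist (fun b => (M : ℝ)⁻¹ * ∑ m, W (C m) b) p
      = 1 / 2 * ∑ b, ∑ C : Fin M → A,
        (∏ m, q (C m)) * |(M : ℝ)⁻¹ * ∑ m, W (C m) b - p b| := by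
    rw [Finset.sum_comm, Finset.mul_sum]
    refine Finset.sum_congr rfl fun C _ => ?_
    rw [tvDist, ← Finset.mul_sum]
    ring
  have hsum := Finset.sum_le_sum fun b (_ : b ∈ Finset.univ) => letter b
  rw [Finset.sum_add_distrib, ← Finset.mul_sum, ← Finset.mul_sum, hp1] at hsum
  simp_rw [hNq]
  rw [total]
  have := Real.sqrt_nonneg ((M : ℝ)⁻¹ * τ)
  linarith

/-- Chebyshev bound on the probability that the information density of an i.i.d. sequence
exceeds its mean by `n * δ`. -/
lemma atypical_prob_le {X Y : Type*} [Fintype X] [Fintype Y]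
    (P : X × Y → ℝ) (hP0 : ∀ p, 0 ≤ P p) (hP1 : ∑ p, P p = 1) {δ : ℝ} (hδ : 0 < δ) :
    ∃ V : ℝ, ∀ n : ℕ, 0 < n →
      (∑ xn : Fin n → X, ∑ yn : Fin n → Y,
        if ∏ t, P (xn t, yn t) / (∑ x', P (x', yn t)) ≤
            (2 : ℝ) ^ ((n : ℝ) * (mutInf (fun x y => P (x, y)) + δ)) * ∏ t, ∑ y', P (xn t, y')
        then 0
        else (∏ t, ∑ x', P (x', yn t)) * ∏ t, P (xn t, yn t) / (∑ x', P (x', yn t)))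
      ≤ V / (n : ℝ) := by
  set I := mutInf (fun x y => P (x, y)) with hI
  set f : X × Y → ℝ := fun z =>
    Real.logb 2 (P z / ((∑ y', P (z.1, y')) * (∑ x', P (x', z.2)))) - I with hf
  have centered : ∑ z, P z * f z = 0 := by
    simp only [hf, mul_sub, Finset.sum_sub_distrib, ← Finset.sum_mul, hP1, one_mul]
    rw [hI, mutInf, Fintype.sum_prod_type, sub_self]
  refine ⟨(∑ z, P z * f z ^ 2) / δ ^ 2, fun n hn => ?_⟩
  have hn' : (0 : ℝ) < n := by exact_mod_cast hn
  have pointwise : ∀ (xn : Fin n → X) (yn : Fin n → Y),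
      (if ∏ t, P (xn t, yn t) / (∑ x', P (x', yn t)) ≤
            (2 : ℝ) ^ ((n : ℝ) * (I + δ)) * ∏ t, ∑ y', P (xn t, y')
        then 0
        else (∏ t, ∑ x', P (x', yn t)) * ∏ t, P (xn t, yn t) / (∑ x', P (x', yn t)))
      ≤ (∏ t, P (xn t, yn t)) * (∑ t, f (xn t, yn t)) ^ 2 / (n * δ) ^ 2 := by
    intro xn yn
    have hprod : 0 ≤ ∏ t, P (xn t, yn t) := Finset.prod_nonneg fun t _ => hP0 _
    split_ifs with h
    · positivity
    rw [not_le] at h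
    have hpx0 : ∀ t, 0 ≤ ∑ y', P (xn t, y') := fun t => Finset.sum_nonneg fun y _ => hP0 _
    have hpy0 : ∀ t, 0 ≤ ∑ x', P (x', yn t) := fun t => Finset.sum_nonneg fun x _ => hP0 _
    have hpos : 0 < ∏ t, P (xn t, yn t) / (∑ x', P (x', yn t)) :=
      lt_of_le_of_lt (mul_nonneg (by positivity) (Finset.prod_nonneg fun t _ => hpx0 t)) h
    have hne : ∀ t, P (xn t, yn t) / (∑ x', P (x', yn t)) ≠ 0 := fun t =>
      (Finset.prod_ne_zero_iff.1 hpos.ne') t (Finset.mem_univ t)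
    have hPne : ∀ t, P (xn t, yn t) ≠ 0 := fun t => (div_ne_zero_iff.1 (hne t)).1
    have hpyne : ∀ t, ∑ x', P (x', yn t) ≠ 0 := fun t => (div_ne_zero_iff.1 (hne t)).2
    have hpxpos : ∀ t, 0 < ∑ y', P (xn t, y') := fun t =>
      lt_of_lt_of_le (lt_of_le_of_ne (hP0 _) (hPne t).symm)
        (Finset.single_le_sum (f := fun y' => P (xn t, y')) (fun y _ => hP0 _)
          (Finset.mem_univ (yn t)))
    have hjoint : (∏ t, ∑ x', P (x', yn t)) * ∏ t, P (xn t, yn t) / (∑ x', P (x', yn t))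
        = ∏ t, P (xn t, yn t) := by
      rw [← Finset.prod_mul_distrib]
      exact Finset.prod_congr rfl fun t _ => mul_div_cancel₀ _ (hpyne t)
    have hratio : (2 : ℝ) ^ ((n : ℝ) * (I + δ)) <
        ∏ t, P (xn t, yn t) / ((∑ y', P (xn t, y')) * (∑ x', P (x', yn t))) := by
      have : ∏ t, P (xn t, yn t) / ((∑ y', P (xn t, y')) * (∑ x', P (x', yn t)))
          = (∏ t, P (xn t, yn t) / (∑ x', P (x', yn t))) / ∏ t, ∑ y', P (xn t, y') := by
        rw [← Finset.prod_div_distrib]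
        exact Finset.prod_congr rfl fun t _ => by rw [div_div, mul_comm]
      rw [this, lt_div_iff₀ (Finset.prod_pos fun t _ => hpxpos t)]
      exact h
    have hlog : (n : ℝ) * δ ≤ ∑ t, f (xn t, yn t) := by
      have h1 := Real.logb_lt_logb (b := 2) one_lt_two (by positivity) hratio
      rw [Real.logb_rpow two_pos (by norm_num), Real.logb_prod _ _ fun t _ =>
        div_ne_zero (hPne t) (mul_ne_zero (hpxpos t).ne' (hpyne t))] at h1
      simp only [hf, Finset.sum_sub_distrib, Finset.sum_const, Finset.card_univ,
        Fintype.card_fin, nsmul_eq_mul]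
      linarith
    rw [hjoint, le_div_iff₀ (by positivity)]
    exact mul_le_mul_of_nonneg_left (pow_le_pow_left₀ (by positivity) hlog 2) hprod
  refine (Finset.sum_le_sum fun xn _ => Finset.sum_le_sum fun yn _ => pointwise xn yn).trans_eq ?_
  have moment := sum_prod_mul_sum_sq (ι := Fin n) P hP1 f centered
  rw [← (Equiv.arrowProdEquivProdArrow (Fin n) (fun _ => X) (fun _ => Y)).symm.sum_comp,
    Fintype.sum_prod_type] at moment
  simp only [Equiv.arrowProdEquivProdArrow, Equiv.coe_fn_symm_mk, Fintype.card_fin] at moment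
  simp_rw [← Finset.sum_div]
  rw [moment]
  field_simp

/-- Soft-covering lemma: Let `P_{XY}` be a joint pmf on the finite
set `X × Y` and let `R > I(X;Y)`.  For each `n`, draw a random codebook of
`⌈2^{nR}⌉` codewords in `Yⁿ`, mutually independent with i.i.d. coordinates of
law `P_Y`.  Then the expected total variation distance between the output
distribution on `Xⁿ` (select a codeword uniformly and pass it through the
memoryless channel `P_{X|Y}`) and the i.i.d. distribution `∏ₜ P_X` vanishes
as `n → ∞`.  Here the expectation over the random codebook is written as the
finite sum over all codebooks `C : Fin ⌈2^{nR}⌉ → (Fin n → Y)` weighted by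
`∏_{m,t} P_Y(C m t)`, and `P_{X|Y}(x|y) = P_{XY}(x,y)/P_Y(y)`. -/
theorem soft_covering_lemma {X Y : Type*} [Fintype X] [Fintype Y]
    (P : X × Y → ℝ)
    (hP0 : ∀ p, 0 ≤ P p) (hP1 : ∑ p, P p = 1)
    (R : ℝ)
    (hR : R > mutInf (fun x y => P (x, y))) :
    Filter.Tendsto
      (fun n : ℕ =>
        ∑ C : Fin (Nat.ceil ((2 : ℝ) ^ ((n : ℝ) * R))) → (Fin n → Y),
          (∏ m, ∏ t, ∑ x', P (x', C m t)) *
            tvDist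
              (fun xn : Fin n → X =>
                ((Nat.ceil ((2 : ℝ) ^ ((n : ℝ) * R)) : ℝ))⁻¹ *
                  ∑ m, ∏ t, P (xn t, C m t) / (∑ x', P (x', C m t)))
              (fun xn : Fin n → X => ∏ t, ∑ y', P (xn t, y')))
      Filter.atTop (nhds 0) := by
  set I := mutInf (fun x y => P (x, y)) with hI
  set δ := (R - I) / 2 with hδdef
  have hδ : 0 < δ := by rw [hδdef]; linarith
  obtain ⟨V, hV⟩ := atypical_prob_le P hP0 hP1 hδ
  have hpy0 : ∀ y, 0 ≤ ∑ x', P (x', y) := fun y => Finset.sum_nonneg fun x _ => hP0 _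
  have hpy1 : ∑ y, ∑ x', P (x', y) = 1 := by
    rw [Finset.sum_comm, ← Fintype.sum_prod_type, hP1]
  have hpx1 : ∑ x, ∑ y', P (x, y') = 1 := by rw [← Fintype.sum_prod_type, hP1]
  have hcancel : ∀ x y, (∑ x', P (x', y)) * (P (x, y) / ∑ x', P (x', y)) = P (x, y) := by
    intro x y
    by_cases h : ∑ x', P (x', y) = 0
    · have := (Finset.sum_eq_zero_iff_of_nonneg fun x _ => hP0 (x, y)).1 h x (Finset.mem_univ x)
      simp [h, this]
    · exact mul_div_cancel₀ _ h
  have bound : ∀ n : ℕ, 0 < n → _ := fun n hn =>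
    (one_shot_soft_covering (fun yn : Fin n → Y => ∏ t, ∑ x', P (x', yn t))
      (fun yn => Finset.prod_nonneg fun t _ => hpy0 _)
      (sum_prod_eq_one _ hpy1)
      (fun yn xn => ∏ t, P (xn t, yn t) / (∑ x', P (x', yn t)))
      (fun yn xn => Finset.prod_nonneg fun t _ => div_nonneg (hP0 _) (hpy0 _))
      (fun xn : Fin n → X => ∏ t, ∑ y', P (xn t, y'))
      (fun xn => by
        rw [sum_prod_mul_prod (fun y => ∑ x', P (x', y))
          (fun t y => P (xn t, y) / ∑ x', P (x', y))]
        simp_rw [hcancel])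
      (sum_prod_eq_one _ hpx1)
      (τ := (2 : ℝ) ^ ((n : ℝ) * (I + δ))) (by positivity)
      (M := Nat.ceil ((2 : ℝ) ^ ((n : ℝ) * R))) (Nat.ceil_pos.2 (by positivity))).trans
    (add_le_add_right (hV n hn) _)
  have rate : ∀ n : ℕ,
      √(((Nat.ceil ((2 : ℝ) ^ ((n : ℝ) * R)) : ℕ) : ℝ)⁻¹ * (2 : ℝ) ^ ((n : ℝ) * (I + δ)))
        ≤ √(((2 : ℝ) ^ (-δ)) ^ n) := by
    intro n
    apply Real.sqrt_le_sqrt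
    calc _ ≤ ((2 : ℝ) ^ ((n : ℝ) * R))⁻¹ * (2 : ℝ) ^ ((n : ℝ) * (I + δ)) := by
          gcongr
          exact Nat.le_ceil _
      _ = ((2 : ℝ) ^ (-δ)) ^ n := by
          rw [← Real.rpow_neg two_pos.le, ← Real.rpow_add two_pos, ← Real.rpow_natCast,
            ← Real.rpow_mul two_pos.le]
          congr 1
          rw [hδdef]
          ring
  have hlim : Filter.Tendsto (fun n : ℕ => √(((2 : ℝ) ^ (-δ)) ^ n) + V / (n : ℝ))
      Filter.atTop (nhds 0) := by
    have hgeom := tendsto_pow_atTop_nhds_zero_of_lt_one (r := (2 : ℝ) ^ (-δ)) (by positivity)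
      (Real.rpow_lt_one_of_one_lt_of_neg one_lt_two (by linarith))
    simpa using hgeom.sqrt.add (tendsto_const_div_atTop_nhds_zero_nat V)
  refine squeeze_zero' (Filter.Eventually.of_forall fun n => ?_) ?_ hlim
  · refine Finset.sum_nonneg fun C _ => mul_nonneg
      (Finset.prod_nonneg fun m _ => Finset.prod_nonneg fun t _ => hpy0 _) ?_
    exact mul_nonneg (by norm_num) (Finset.sum_nonneg fun s _ => abs_nonneg _)
  · filter_upwards [Filter.eventually_gt_atTop 0] with n hn
    exact (bound n hn).trans (add_le_add_left (rate n) _)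
end

section
/- (Wyner-Ziv achievability via the likelihood encoder.) Let X, B, Y, V be finite sets, let P̄_{XB} be a joint pmf on X × B, and let d : X × Y → ℝ≥0 be a distortion measure. Suppose P̄_{V|X} is a conditional pmf and φ : V × B → Y is a function such that, for the joint pmf P̄(v,x,b) = P̄_{XB}(x,b) P̄_{V|X}(v|x) (so that V − X − B forms a Markov chain), E_{P̄}[ d(X, φ(V,B)) ] ≤ D. Then every rate R > I_{P̄}(X; V | B) is achievable for distortion D: there exists a sequence of (possibly stochastic) encoders f_n mapping X^n to a message set M_n with |M_n| ≤ ⌈2^{nR}⌉ and (possibly stochastic) decoders g_n mapping M_n × B^n to Y^n such that, for the i.i.d. source (X_t, B_t) ~ P̄_{XB}, lim sup_{n→∞} E[ (1/n) ∑_{t=1}^n d(X_t, Y_t) ] ≤ D, where Y^n = g_n(f_n(X^n), B^n). -/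
open Finset

/-- Conditional mutual information (in bits) of a joint pmf `P : A → B → C → ℝ`:
`I(A;B|C) = ∑_{a,b,c} P(a,b,c) log₂( P(a,b,c) P_C(c) / (P_{AC}(a,c) P_{BC}(b,c)) )`. -/
noncomputable def condMutInf {A B C : Type*} [Fintype A] [Fintype B] [Fintype C]
    (P : A → B → C → ℝ) : ℝ :=
  ∑ a, ∑ b, ∑ c, P a b c *
    Real.logb 2 ((P a b c * ∑ a', ∑ b', P a' b' c) /
      ((∑ b', P a b' c) * (∑ a', P a' b c)))

/-- Expectation of `F` under the product of copies of the mass function `q`. -/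
noncomputable def iidExp {ι V : Type*} [Fintype ι] [DecidableEq ι] [Fintype V]
    (q : V → ℝ) (F : (ι → V) → ℝ) : ℝ :=
  ∑ c : ι → V, (∏ l, q (c l)) * F c

section iidExp

variable {ι V : Type*} [Fintype ι] [DecidableEq ι] [Fintype V] {q : V → ℝ}

lemma sum_prod_apply (f : ι → V → ℝ) : ∑ c : ι → V, ∏ l, f l (c l) = ∏ l, ∑ v, f l v := by
  rw [Finset.prod_univ_sum]
  simp

lemma iidExp_add (F G : (ι → V) → ℝ) :
    iidExp q (fun c => F c + G c) = iidExp q F + iidExp q G := by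
  simp [iidExp, mul_add, sum_add_distrib]

lemma iidExp_sum {κ : Type*} (s : Finset κ) (F : κ → (ι → V) → ℝ) :
    iidExp q (fun c => ∑ k ∈ s, F k c) = ∑ k ∈ s, iidExp q (F k) := by
  simp only [iidExp, mul_sum]
  exact sum_comm

lemma iidExp_const_mul (a : ℝ) (F : (ι → V) → ℝ) :
    iidExp q (fun c => a * F c) = a * iidExp q F := by
  simp only [iidExp, mul_sum]
  exact sum_congr rfl fun c _ => by ring

lemma iidExp_const (hq1 : ∑ v, q v = 1) (a : ℝ) :
    iidExp (ι := ι) q (fun _ => a) = a := by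
  simp only [iidExp, ← sum_mul]
  rw [sum_prod_apply (fun _ => q)]
  simp [hq1]

lemma iidExp_mono (hq0 : ∀ v, 0 ≤ q v) {F G : (ι → V) → ℝ} (h : ∀ c, F c ≤ G c) :
    iidExp q F ≤ iidExp q G :=
  sum_le_sum fun c _ => mul_le_mul_of_nonneg_left (h c) (prod_nonneg fun _ _ => hq0 _)

lemma iidExp_prod (h : ι → V → ℝ) :
    iidExp q (fun c => ∏ l, h l (c l)) = ∏ l, ∑ v, q v * h l v := by
  simp only [iidExp, ← prod_mul_distrib]
  exact sum_prod_apply (fun l v => q v * h l v)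

lemma iidExp_apply (hq1 : ∑ v, q v = 1) (i : ι) (f : V → ℝ) :
    iidExp q (fun c => f (c i)) = ∑ v, q v * f v := by
  have h := iidExp_prod (q := q) (fun (l : ι) v => if l = i then f v else 1)
  have h2 : ∀ l, ∑ v, q v * (if l = i then f v else 1)
      = if l = i then ∑ v, q v * f v else 1 := by
    intro l
    split_ifs <;> simp [hq1]
  simpa only [h2, prod_ite_eq', mem_univ, if_true] using h

lemma iidExp_apply_mul_apply (hq1 : ∑ v, q v = 1) {i j : ι} (hij : i ≠ j) (f g : V → ℝ) :
    iidExp q (fun c => f (c i) * g (c j)) = (∑ v, q v * f v) * ∑ v, q v * g v := by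
  have h := iidExp_prod (q := q)
    (fun (l : ι) v => (if l = i then f v else 1) * (if l = j then g v else 1))
  have h2 : ∀ l, ∑ v, q v * ((if l = i then f v else 1) * (if l = j then g v else 1))
      = (if l = i then ∑ v, q v * f v else 1) * (if l = j then ∑ v, q v * g v else 1) := by
    intro l
    by_cases h1 : l = i
    · simp [h1, hij]
    · simp only [h1, if_false, one_mul]
      split_ifs <;> simp [hq1]
  simpa only [h2, prod_mul_distrib, prod_ite_eq', mem_univ, if_true] using h

/-- The variance of a sum of i.i.d. terms is at most the number of terms times the second
moment of one term. -/
lemma iidExp_sq_sub_le (hq1 : ∑ v, q v = 1) (f : V → ℝ) :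
    iidExp (ι := ι) q (fun c => (∑ l, f (c l) - Fintype.card ι * ∑ v, q v * f v) ^ 2)
      ≤ Fintype.card ι * ∑ v, q v * f v ^ 2 := by
  set μ := ∑ v, q v * f v with hμ
  have hg : ∑ v, q v * (f v - μ) = 0 := by
    simp [mul_sub, sum_sub_distrib, ← sum_mul, hq1, hμ]
  have hg2 : ∑ v, q v * ((f v - μ) * (f v - μ)) ≤ ∑ v, q v * f v ^ 2 := by
    have : ∑ v, q v * ((f v - μ) * (f v - μ)) = ∑ v, q v * f v ^ 2 - μ ^ 2 := by
      have e : ∀ v, q v * ((f v - μ) * (f v - μ))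
          = q v * f v ^ 2 - 2 * μ * (q v * f v) + q v * μ ^ 2 := fun v => by ring
      simp only [e, sum_add_distrib, sum_sub_distrib, ← mul_sum, ← sum_mul, hq1, ← hμ]
      ring
    nlinarith [sq_nonneg μ]
  have key : ∀ c : ι → V, (∑ l, f (c l) - Fintype.card ι * μ) ^ 2
      = ∑ i, ∑ j, (f (c i) - μ) * (f (c j) - μ) := by
    intro c
    have : ∑ l, f (c l) - Fintype.card ι * μ = ∑ l, (f (c l) - μ) := by simp
    rw [this, sq, sum_mul_sum]
  simp only [key, iidExp_sum]
  have inner : ∀ i j : ι, iidExp q (fun c => (f (c i) - μ) * (f (c j) - μ))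
      = if i = j then ∑ v, q v * ((f v - μ) * (f v - μ)) else 0 := by
    intro i j
    split_ifs with h
    · subst h
      exact iidExp_apply hq1 i (fun v => (f v - μ) * (f v - μ))
    · rw [iidExp_apply_mul_apply hq1 h (fun v => f v - μ) (fun v => f v - μ), hg, zero_mul]
  simp only [inner, sum_ite_eq, mem_univ, if_true, sum_const, card_univ, nsmul_eq_mul]
  gcongr

/-- Weak law of large numbers in Chebyshev form, one-sided version. -/
lemma iidExp_indicator_le (hq0 : ∀ v, 0 ≤ q v) (hq1 : ∑ v, q v = 1) (f : V → ℝ) {ε : ℝ}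
    (hε : 0 < ε) [Nonempty ι] :
    iidExp (ι := ι) q (fun c => if Fintype.card ι * (∑ v, q v * f v + ε) ≤ ∑ l, f (c l)
        then 1 else 0)
      ≤ (∑ v, q v * f v ^ 2) / (Fintype.card ι * ε ^ 2) := by
  have hn : (0 : ℝ) < Fintype.card ι := by exact_mod_cast Fintype.card_pos
  set μ := ∑ v, q v * f v with hμ
  have h1 := iidExp_sq_sub_le (ι := ι) hq1 f
  have h2 : iidExp (ι := ι) q (fun c => if Fintype.card ι * (μ + ε) ≤ ∑ l, f (c l) then 1 else 0)
      ≤ iidExp (ι := ι) q (fun c => ((Fintype.card ι * ε) ^ 2)⁻¹ *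
          (∑ l, f (c l) - Fintype.card ι * μ) ^ 2) := by
    refine iidExp_mono hq0 fun c => ?_
    split_ifs with h
    · rw [inv_mul_eq_div, le_div_iff₀ (by positivity), one_mul]
      have : Fintype.card ι * ε ≤ ∑ l, f (c l) - Fintype.card ι * μ := by linarith
      gcongr
    · positivity
  rw [iidExp_const_mul] at h2
  refine h2.trans ((mul_le_mul_of_nonneg_left h1 (by positivity)).trans (le_of_eq ?_))
  field_simp

end iidExp

section OneShot

/-- One-sided soft covering: the normalised sum of densities `r (c l)` over a random codebook
falls short of `1` by little on average. -/
lemma iidExp_shortfall_le {ι V : Type*} [Fintype ι] [DecidableEq ι] [Nonempty ι] [Fintype V]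
    {q : V → ℝ} (hq0 : ∀ v, 0 ≤ q v) (hq1 : ∑ v, q v = 1) {r : V → ℝ} (hr0 : ∀ v, 0 ≤ r v)
    (hr1 : ∑ v, q v * r v ≤ 1) {G δ : ℝ} (hG : 0 < G) (hδ : 0 < δ) :
    iidExp (ι := ι) q (fun c => max 0 (1 - (Fintype.card ι : ℝ)⁻¹ * ∑ l, r (c l)))
      ≤ (1 - ∑ v, q v * (if r v ≤ G then r v else 0)) + δ + G / (Fintype.card ι * δ) := by
  have hn : (0 : ℝ) < Fintype.card ι := by exact_mod_cast Fintype.card_pos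
  set f : V → ℝ := fun v => if r v ≤ G then r v else 0 with hf
  have hfr : ∀ v, f v ≤ r v := fun v => by
    simp only [hf]; split_ifs <;> simp [hr0]
  have hf0 : ∀ v, 0 ≤ f v := fun v => by
    simp only [hf]; split_ifs <;> simp [hr0]
  have hfG : ∀ v, f v ≤ G := fun v => by
    simp only [hf]; split_ifs with h
    exacts [h, hG.le]
  have ha1 : ∑ v, q v * f v ≤ 1 :=
    (sum_le_sum fun v _ => mul_le_mul_of_nonneg_left (hfr v) (hq0 v)).trans hr1
  have hvar := iidExp_sq_sub_le (ι := ι) hq1 f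
  have hf2 : ∑ v, q v * f v ^ 2 ≤ G := by
    calc ∑ v, q v * f v ^ 2 ≤ ∑ v, G * (q v * f v) := by
          refine sum_le_sum fun v _ => ?_
          nlinarith [mul_nonneg (mul_nonneg (hq0 v) (hf0 v)) (sub_nonneg.2 (hfG v))]
      _ = G * ∑ v, q v * f v := by rw [mul_sum]
      _ ≤ G * 1 := by gcongr
      _ = G := mul_one G
  set a := ∑ v, q v * f v with ha
  have hpt : ∀ c : ι → V, max 0 (1 - (Fintype.card ι : ℝ)⁻¹ * ∑ l, r (c l))
      ≤ ((1 - a) + δ) + (δ * (Fintype.card ι : ℝ) ^ 2)⁻¹ *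
          (∑ l, f (c l) - Fintype.card ι * a) ^ 2 := by
    intro c
    set T := (Fintype.card ι : ℝ)⁻¹ * ∑ l, f (c l) with hT
    have hTr : T ≤ (Fintype.card ι : ℝ)⁻¹ * ∑ l, r (c l) := by
      rw [hT]; gcongr with l; exact hfr _
    have e : (δ * (Fintype.card ι : ℝ) ^ 2)⁻¹ * (∑ l, f (c l) - Fintype.card ι * a) ^ 2
        = (T - a) ^ 2 / δ := by
      rw [hT]; field_simp
    rw [e]
    have h0 : 0 ≤ (T - a) ^ 2 / δ := by positivity
    have h1 : a - T ≤ δ + (T - a) ^ 2 / δ := by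
      have : δ + (T - a) ^ 2 / δ - (a - T) = ((δ - (a - T)) ^ 2 + δ * (a - T)) / δ := by
        field_simp; ring
      rcases le_total (a - T) 0 with h | h
      · linarith
      · have : 0 ≤ ((δ - (a - T)) ^ 2 + δ * (a - T)) / δ := by positivity
        linarith
    apply max_le <;> linarith
  refine (iidExp_mono hq0 hpt).trans ?_
  rw [iidExp_add, iidExp_const hq1, iidExp_const_mul]
  have h3 : (δ * (Fintype.card ι : ℝ) ^ 2)⁻¹ *
      iidExp (ι := ι) q (fun c => (∑ l, f (c l) - Fintype.card ι * a) ^ 2)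
      ≤ (δ * (Fintype.card ι : ℝ) ^ 2)⁻¹ * (Fintype.card ι * G) := by
    gcongr
    exact hvar.trans (by gcongr)
  have h4 : (δ * (Fintype.card ι : ℝ) ^ 2)⁻¹ * (Fintype.card ι * G)
      = G / (Fintype.card ι * δ) := by field_simp
  linarith

/-- A nonnegative vector can be normalised to a mass function. -/
lemma exists_mass_mul_sum_eq {ι : Type*} [Fintype ι] [Nonempty ι] (u : ι → ℝ)
    (hu : ∀ i, 0 ≤ u i) :
    ∃ e : ι → ℝ, (∀ i, 0 ≤ e i) ∧ ∑ i, e i = 1 ∧ ∀ i, e i * ∑ j, u j = u i := by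
  rcases (sum_nonneg fun i _ => hu i : 0 ≤ ∑ i, u i).eq_or_lt with h | h
  · refine ⟨fun _ => (Fintype.card ι : ℝ)⁻¹, fun _ => by positivity, by simp, fun i => ?_⟩
    rw [← h, mul_zero]
    exact ((sum_eq_zero_iff_of_nonneg fun i _ => hu i).1 h.symm i (mem_univ i)).symm
  · exact ⟨fun i => u i / ∑ j, u j, fun i => div_nonneg (hu i) h.le,
      by rw [← sum_div, div_self h.ne'], fun i => div_mul_cancel₀ _ h.ne'⟩

/-- Cost of a code built from a fixed codebook `c`, with likelihood encoder and threshold decoder. -/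
lemma exists_code_of_codebook {X B V Y : Type*} [Fintype X] [Fintype B]
    (P : X → B → ℝ) (hP0 : ∀ x b, 0 ≤ P x b)
    (r : X → V → ℝ) (hr0 : ∀ x v, 0 ≤ r x v)
    (s : V → B → ℝ) (φ : V → B → Y) (dist : X → Y → ℝ) {Δ : ℝ}
    (hd0 : ∀ x y, 0 ≤ dist x y) (hd1 : ∀ x y, dist x y ≤ Δ) {M K : ℕ} [NeZero M] [NeZero K]
    (G : ℝ) (c : Fin M × Fin K → V) :
    ∃ (enc : X → Fin M → ℝ) (dec : Fin M → B → Y),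
      (∀ x, (∀ m, 0 ≤ enc x m) ∧ ∑ m, enc x m = 1) ∧
      ∑ x, ∑ b, P x b * ∑ m, enc x m * dist x (dec m b) ≤
        ∑ x, ∑ b, P x b * (∑ l, (Fintype.card (Fin M × Fin K) : ℝ)⁻¹ * (r x (c l) *
          (dist x (φ (c l) b) + Δ * ((if s (c l) b ≤ G then 1 else 0) +
            ∑ k ∈ univ.erase l.2, if G < s (c (l.1, k)) b then 1 else 0))) +
          Δ * max 0 (1 - (Fintype.card (Fin M × Fin K) : ℝ)⁻¹ * ∑ l, r x (c l))) := by
  classical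
  set L : ℝ := (Fintype.card (Fin M × Fin K) : ℝ) with hL
  have hL0 : 0 ≤ L := Nat.cast_nonneg _
  choose e he0 he1 heu using fun x => exists_mass_mul_sum_eq (fun l => L⁻¹ * r x (c l))
    (fun l => mul_nonneg (inv_nonneg.2 hL0) (hr0 x _))
  let khat : Fin M → B → Fin K := fun m b =>
    if h : ∃ k, G < s (c (m, k)) b then h.choose else 0
  have hkhat : ∀ m b k, khat m b ≠ k → s (c (m, k)) b ≤ G ∨
      ∃ k' ∈ univ.erase k, G < s (c (m, k')) b := by
    intro m b k hk
    by_cases h : G < s (c (m, k)) b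
    · right
      have h' : ∃ k, G < s (c (m, k)) b := ⟨k, h⟩
      have hk' : khat m b = h'.choose := by simp only [khat, dif_pos h']
      exact ⟨khat m b, by simp [hk], by rw [hk']; exact h'.choose_spec⟩
    · exact Or.inl (not_lt.1 h)
  refine ⟨fun x m => ∑ k, e x (m, k), fun m b => φ (c (m, khat m b)) b, fun x => ⟨fun m =>
    sum_nonneg fun k _ => he0 x _, ?_⟩, ?_⟩
  · rw [← he1 x, Fintype.sum_prod_type]
  refine sum_le_sum fun x _ => sum_le_sum fun b _ => mul_le_mul_of_nonneg_left ?_ (hP0 x b)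
  have hΔ : 0 ≤ Δ := (hd0 x (φ (c 0) b)).trans (hd1 _ _)
  have hsum : ∑ m, (∑ k, e x (m, k)) * dist x (φ (c (m, khat m b)) b)
      = ∑ l : Fin M × Fin K, e x l * dist x (φ (c (l.1, khat l.1 b)) b) := by
    rw [Fintype.sum_prod_type]
    exact sum_congr rfl fun m _ => by rw [sum_mul]
  rw [hsum]
  set S := L⁻¹ * ∑ l, r x (c l) with hS
  have hS' : ∑ l, L⁻¹ * r x (c l) = S := by rw [hS, mul_sum]
  have hdist : ∀ l : Fin M × Fin K, dist x (φ (c (l.1, khat l.1 b)) b) ≤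
      dist x (φ (c l) b) + Δ * ((if s (c l) b ≤ G then 1 else 0) +
            ∑ k ∈ univ.erase l.2, if G < s (c (l.1, k)) b then 1 else 0) := by
    rintro ⟨m, k⟩
    have hA : (0 : ℝ) ≤ if s (c (m, k)) b ≤ G then 1 else 0 := by split_ifs <;> norm_num
    have hB : (0 : ℝ) ≤ ∑ k' ∈ univ.erase k, if G < s (c (m, k')) b then (1 : ℝ) else 0 :=
      sum_nonneg fun k' _ => by split_ifs <;> norm_num
    by_cases hk : khat m b = k
    · simp only [hk]
      have := mul_nonneg hΔ (add_nonneg hA hB)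
      linarith
    · have h1 : (1 : ℝ) ≤ (if s (c (m, k)) b ≤ G then 1 else 0) +
            ∑ k' ∈ univ.erase k, if G < s (c (m, k')) b then (1 : ℝ) else 0 := by
        rcases hkhat m b k hk with h | ⟨k', hk', h⟩
        · rw [if_pos h]; linarith
        · have := single_le_sum (f := fun k' => if G < s (c (m, k')) b then (1 : ℝ) else 0)
            (fun k' _ => by split_ifs <;> norm_num) hk'
          simp only [if_pos h] at this
          linarith
      have h2 := mul_le_mul_of_nonneg_left h1 hΔ
      have h3 := hd1 x (φ (c (m, khat m b)) b)
      have h4 := hd0 x (φ (c (m, k)) b)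
      simp only
      linarith
  have hmain : ∀ l, e x l * dist x (φ (c (l.1, khat l.1 b)) b) ≤
      L⁻¹ * (r x (c l) *
          (dist x (φ (c l) b) + Δ * ((if s (c l) b ≤ G then 1 else 0) +
            ∑ k ∈ univ.erase l.2, if G < s (c (l.1, k)) b then 1 else 0))) +
      e x l * (Δ * max 0 (1 - S)) := by
    intro l
    have hu := heu x l
    rw [hS'] at hu
    have h1 : e x l ≤ L⁻¹ * r x (c l) + e x l * max 0 (1 - S) := by
      have := mul_le_mul_of_nonneg_left (le_max_right 0 (1 - S)) (he0 x l)
      linarith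
    have hu0 : 0 ≤ L⁻¹ * r x (c l) := mul_nonneg (inv_nonneg.2 hL0) (hr0 x _)
    calc e x l * dist x (φ (c (l.1, khat l.1 b)) b)
        ≤ (L⁻¹ * r x (c l) + e x l * max 0 (1 - S)) * dist x (φ (c (l.1, khat l.1 b)) b) :=
          mul_le_mul_of_nonneg_right h1 (hd0 _ _)
      _ = L⁻¹ * r x (c l) * dist x (φ (c (l.1, khat l.1 b)) b)
          + (e x l * max 0 (1 - S)) * dist x (φ (c (l.1, khat l.1 b)) b) := by ring
      _ ≤ _ := by
        refine add_le_add ?_ ?_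
        · rw [← mul_assoc]
          exact mul_le_mul_of_nonneg_left (hdist l) hu0
        · rw [mul_comm Δ, ← mul_assoc]
          exact mul_le_mul_of_nonneg_left (hd1 _ _)
            (mul_nonneg (he0 x l) (le_max_left _ _))
  refine (sum_le_sum fun l _ => hmain l).trans (le_of_eq ?_)
  rw [sum_add_distrib, ← sum_mul, he1, one_mul]

lemma exists_le_iidExp {ι V : Type*} [Fintype ι] [DecidableEq ι] [Fintype V]
    {q : V → ℝ} (hq0 : ∀ v, 0 ≤ q v) (hq1 : ∑ v, q v = 1) (F : (ι → V) → ℝ) :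
    ∃ c, F c ≤ iidExp q F := by
  have : Nonempty V := by
    by_contra h
    rw [not_nonempty_iff] at h
    simp at hq1
  obtain ⟨c, hc⟩ := Finite.exists_min F
  refine ⟨c, ?_⟩
  rw [← iidExp_const (ι := ι) hq1 (F c)]
  exact iidExp_mono hq0 hc

/-- One-shot Wyner–Ziv coding bound. Here `r` is the density of the test channel `W` with respect
to the codeword distribution `q`, and `s` is a (sub)density used by the threshold decoder. -/
theorem exists_code_one_shot {X B V Y : Type*} [Fintype X] [Fintype B] [Fintype V]
    (P : X → B → ℝ) (hP0 : ∀ x b, 0 ≤ P x b) (hP1 : ∑ x, ∑ b, P x b = 1)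
    (W : V → X → ℝ) (hW1 : ∀ x, ∑ v, W v x = 1)
    (q : V → ℝ) (hq0 : ∀ v, 0 ≤ q v) (hq1 : ∑ v, q v = 1)
    (r : X → V → ℝ) (hr0 : ∀ x v, 0 ≤ r x v) (hqr : ∀ x v, q v * r x v ≤ W v x)
    (hPr : ∀ x b v, P x b * (q v * r x v) = P x b * W v x)
    (s : V → B → ℝ) (hs0 : ∀ v b, 0 ≤ s v b) (hs1 : ∀ b, ∑ v, q v * s v b ≤ 1)
    (φ : V → B → Y) (dist : X → Y → ℝ) {Δ : ℝ} (hΔ : 0 ≤ Δ)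
    (hd0 : ∀ x y, 0 ≤ dist x y) (hd1 : ∀ x y, dist x y ≤ Δ) {M K : ℕ} (hM : 0 < M) (hK : 0 < K)
    {G₁ G₂ δ : ℝ} (hG₁ : 0 < G₁) (hG₂ : 0 < G₂) (hδ : 0 < δ) :
    ∃ (enc : X → Fin M → ℝ) (dec : Fin M → B → Y),
      (∀ x, (∀ m, 0 ≤ enc x m) ∧ ∑ m, enc x m = 1) ∧
      ∑ x, ∑ b, P x b * ∑ m, enc x m * dist x (dec m b) ≤
        ∑ x, ∑ b, ∑ v, P x b * W v x * (dist x (φ v b) +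
          Δ * ((if G₁ < r x v then 1 else 0) + if s v b ≤ G₂ then 1 else 0)) +
        Δ * (δ + G₁ / ((M * K : ℕ) * δ) + (K - 1 : ℝ) / G₂) := by
  classical
  have : NeZero M := ⟨hM.ne'⟩
  have : NeZero K := ⟨hK.ne'⟩
  set L : ℝ := (Fintype.card (Fin M × Fin K) : ℝ) with hL
  have hLMK : L = (M * K : ℕ) := by simp [hL]
  have hL0 : 0 < L := by rw [hLMK]; exact_mod_cast Nat.mul_pos hM hK
  have hqr1 : ∀ x, ∑ v, q v * r x v ≤ 1 := fun x =>
    (sum_le_sum fun v _ => hqr x v).trans (hW1 x).le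
  -- the probability that a fixed wrong codeword passes the threshold test
  have hpack : ∀ b, ∑ v, q v * (if G₂ < s v b then 1 else 0) ≤ 1 / G₂ := by
    intro b
    calc ∑ v, q v * (if G₂ < s v b then 1 else 0) ≤ ∑ v, (q v * s v b) / G₂ := by
          refine sum_le_sum fun v _ => ?_
          rw [mul_div_assoc]
          refine mul_le_mul_of_nonneg_left ?_ (hq0 v)
          split_ifs with h
          · rw [le_div_iff₀ hG₂]; linarith
          · exact div_nonneg (hs0 v b) hG₂.le
      _ = (∑ v, q v * s v b) / G₂ := by rw [sum_div]
      _ ≤ 1 / G₂ := by gcongr; exact hs1 b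
  obtain ⟨c, hc⟩ := exists_le_iidExp (ι := Fin M × Fin K) hq0 hq1 (fun c =>
    ∑ x, ∑ b, P x b * (∑ l, L⁻¹ * (r x (c l) *
          (dist x (φ (c l) b) + Δ * ((if s (c l) b ≤ G₂ then 1 else 0) +
            ∑ k ∈ univ.erase l.2, if G₂ < s (c (l.1, k)) b then 1 else 0))) +
          Δ * max 0 (1 - L⁻¹ * ∑ l, r x (c l))))
  obtain ⟨enc, dec, henc, hcost⟩ := exists_code_of_codebook (M := M) (K := K) P hP0 r hr0 s φ dist
    hd0 hd1 G₂ c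
  refine ⟨enc, dec, henc, (hcost.trans hc).trans ?_⟩
  simp only [iidExp_sum, iidExp_const_mul, iidExp_add]
  have hrest : Δ * (δ + G₁ / ((M * K : ℕ) * δ) + (K - 1 : ℝ) / G₂) =
      ∑ x, ∑ b, P x b * (Δ * (δ + G₁ / ((M * K : ℕ) * δ) + (K - 1 : ℝ) / G₂)) := by
    simp only [← sum_mul, hP1, one_mul]
  rw [hrest, ← sum_add_distrib]
  refine sum_le_sum fun x _ => ?_
  rw [← sum_add_distrib]
  refine sum_le_sum fun b _ => ?_
  have hterm : ∀ l : Fin M × Fin K, iidExp q (fun c => r x (c l) *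
      (dist x (φ (c l) b) + Δ * ((if s (c l) b ≤ G₂ then 1 else 0) +
            ∑ k ∈ univ.erase l.2, if G₂ < s (c (l.1, k)) b then 1 else 0)))
      ≤ ∑ v, q v * (r x v * (dist x (φ v b) + Δ * if s v b ≤ G₂ then 1 else 0)) +
        Δ * ((K - 1 : ℝ) / G₂) := by
    intro l
    have e : ∀ c : Fin M × Fin K → V, r x (c l) *
      (dist x (φ (c l) b) + Δ * ((if s (c l) b ≤ G₂ then 1 else 0) +
            ∑ k ∈ univ.erase l.2, if G₂ < s (c (l.1, k)) b then 1 else 0)) =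
      r x (c l) * (dist x (φ (c l) b) + Δ * if s (c l) b ≤ G₂ then 1 else 0) +
      Δ * ∑ k ∈ univ.erase l.2, r x (c l) * if G₂ < s (c (l.1, k)) b then 1 else 0 := by
      intro c
      rw [← mul_sum]; ring
    simp only [e]
    rw [iidExp_add, iidExp_const_mul, iidExp_sum, iidExp_apply hq1 l
      (fun v => r x v * (dist x (φ v b) + Δ * if s v b ≤ G₂ then 1 else 0))]
    gcongr
    calc ∑ k ∈ univ.erase l.2, iidExp q
          (fun c => r x (c l) * if G₂ < s (c (l.1, k)) b then 1 else 0)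
        ≤ ∑ k ∈ univ.erase l.2, 1 / G₂ := by
          refine sum_le_sum fun k hk => ?_
          have hne : l ≠ (l.1, k) := by
            intro h
            exact (mem_erase.1 hk).1 (congrArg Prod.snd h).symm
          rw [iidExp_apply_mul_apply hq1 hne (fun v => r x v)
            (fun v => if G₂ < s v b then 1 else 0)]
          calc _ ≤ 1 * (1 / G₂) := by
                refine mul_le_mul (hqr1 x) (hpack b) ?_ zero_le_one
                refine sum_nonneg fun v _ => mul_nonneg (hq0 v) ?_
                split_ifs <;> norm_num
            _ = 1 / G₂ := one_mul _
      _ = (K - 1 : ℝ) / G₂ := by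
          rw [sum_const, card_erase_of_mem (mem_univ _), card_univ, Fintype.card_fin,
            nsmul_eq_mul, Nat.cast_pred hK]
          ring
  have hshort := iidExp_shortfall_le (ι := Fin M × Fin K) hq0 hq1 (hr0 x) (hqr1 x) hG₁ hδ
  rw [← hL] at hshort
  have hsumterm : ∑ l : Fin M × Fin K, L⁻¹ * iidExp q (fun c => r x (c l) *
      (dist x (φ (c l) b) + Δ * ((if s (c l) b ≤ G₂ then 1 else 0) +
            ∑ k ∈ univ.erase l.2, if G₂ < s (c (l.1, k)) b then 1 else 0)))
      ≤ ∑ v, q v * (r x v * (dist x (φ v b) + Δ * if s v b ≤ G₂ then 1 else 0)) +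
        Δ * ((K - 1 : ℝ) / G₂) := by
    rw [← mul_sum, inv_mul_le_iff₀ hL0]
    refine (sum_le_sum fun l _ => hterm l).trans (le_of_eq ?_)
    rw [sum_const, card_univ, nsmul_eq_mul]
  refine (mul_le_mul_of_nonneg_left (add_le_add hsumterm
    (mul_le_mul_of_nonneg_left hshort hΔ)) (hP0 x b)).trans (le_of_eq ?_)
  have hA : ∑ v, P x b * W v x * (dist x (φ v b) +
          Δ * ((if G₁ < r x v then 1 else 0) + if s v b ≤ G₂ then 1 else 0)) =
      P x b * ∑ v, q v * (r x v * (dist x (φ v b) + Δ * if s v b ≤ G₂ then 1 else 0)) +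
      P x b * (Δ * (1 - ∑ v, q v * (if r x v ≤ G₁ then r x v else 0))) := by
    have hone : 1 - ∑ v, q v * (if r x v ≤ G₁ then r x v else 0) =
        ∑ v, (W v x - q v * (if r x v ≤ G₁ then r x v else 0)) := by
      rw [sum_sub_distrib, hW1]
    rw [hone, mul_sum, mul_sum, mul_sum, ← sum_add_distrib]
    refine sum_congr rfl fun v _ => ?_
    have h := hPr x b v
    by_cases h1 : r x v ≤ G₁
    · rw [if_neg (not_lt.2 h1), if_pos h1]
      linear_combination (-(dist x (φ v b) + Δ * if s v b ≤ G₂ then 1 else 0) + Δ) * h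
    · rw [if_pos (not_le.1 h1), if_neg h1]
      linear_combination (-(dist x (φ v b) + Δ * if s v b ≤ G₂ then 1 else 0)) * h
  rw [hA, hLMK]
  generalize ∑ v, q v * (r x v * (dist x (φ v b) + Δ * if s v b ≤ G₂ then 1 else 0)) = T
  ring

end OneShot

section Block

lemma iidExp_mono_of_pos {ι V : Type*} [Fintype ι] [DecidableEq ι] [Fintype V] {q : V → ℝ}
    (hq0 : ∀ v, 0 ≤ q v) {F G : (ι → V) → ℝ}
    (h : ∀ c : ι → V, (∀ l, 0 < q (c l)) → F c ≤ G c) : iidExp q F ≤ iidExp q G := by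
  refine sum_le_sum fun c _ => ?_
  by_cases hc : ∀ l, 0 < q (c l)
  · exact mul_le_mul_of_nonneg_left (h c hc) (prod_nonneg fun _ _ => hq0 _)
  · push Not at hc
    obtain ⟨l, hl⟩ := hc
    rw [prod_eq_zero (mem_univ l) (le_antisymm hl (hq0 _))]
    simp

/-- A product of i.i.d. ratios exceeds `2 ^ (n * (mean + ε))` with vanishing probability. -/
lemma iidExp_rpow_lt_prod_le {Z : Type*} [Fintype Z] {p : Z → ℝ} (hp0 : ∀ z, 0 ≤ p z)
    (hp1 : ∑ z, p z = 1) {r : Z → ℝ} (hr : ∀ z, 0 < p z → 0 < r z) {ε : ℝ} (hε : 0 < ε)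
    {n : ℕ} (hn : 0 < n) :
    iidExp (ι := Fin n) p (fun c =>
        if (2 : ℝ) ^ ((n : ℝ) * (∑ z, p z * Real.logb 2 (r z) + ε)) < ∏ t, r (c t) then 1 else 0)
      ≤ (∑ z, p z * Real.logb 2 (r z) ^ 2) / (n * ε ^ 2) := by
  have : Nonempty (Fin n) := ⟨⟨0, hn⟩⟩
  have h := iidExp_indicator_le (ι := Fin n) hp0 hp1 (fun z => Real.logb 2 (r z)) hε
  rw [Fintype.card_fin] at h
  refine le_trans (iidExp_mono_of_pos hp0 fun c hc => ?_) h
  have hpos : 0 < ∏ t, r (c t) := prod_pos fun t _ => hr _ (hc t)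
  simp only [← Real.lt_logb_iff_rpow_lt one_lt_two hpos,
    Real.logb_prod _ _ fun t _ => (hr _ (hc t)).ne']
  split_ifs with h1 h2 <;> first | exact absurd h1.le h2 | norm_num

/-- A product of i.i.d. ratios is below `2 ^ (n * (mean - ε))` with vanishing probability. -/
lemma iidExp_prod_le_rpow_le {Z : Type*} [Fintype Z] {p : Z → ℝ} (hp0 : ∀ z, 0 ≤ p z)
    (hp1 : ∑ z, p z = 1) {s : Z → ℝ} (hs : ∀ z, 0 < p z → 0 < s z) {ε : ℝ} (hε : 0 < ε)
    {n : ℕ} (hn : 0 < n) :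
    iidExp (ι := Fin n) p (fun c =>
        if ∏ t, s (c t) ≤ (2 : ℝ) ^ ((n : ℝ) * (∑ z, p z * Real.logb 2 (s z) - ε)) then 1 else 0)
      ≤ (∑ z, p z * Real.logb 2 (s z) ^ 2) / (n * ε ^ 2) := by
  have : Nonempty (Fin n) := ⟨⟨0, hn⟩⟩
  have h := iidExp_indicator_le (ι := Fin n) hp0 hp1 (fun z => -Real.logb 2 (s z)) hε
  simp only [Fintype.card_fin, neg_sq, mul_neg, sum_neg_distrib] at h
  refine le_trans (iidExp_mono_of_pos hp0 fun c hc => ?_) h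
  have hpos : 0 < ∏ t, s (c t) := prod_pos fun t _ => hs _ (hc t)
  simp only [← Real.logb_le_iff_le_rpow one_lt_two hpos,
    Real.logb_prod _ _ fun t _ => (hs _ (hc t)).ne']
  split_ifs with h1 h2
  · exact le_rfl
  · exact absurd (by linarith) h2
  · norm_num
  · exact le_rfl

lemma sum_triple_eq_iidExp {X B V : Type*} [Fintype X] [Fintype B] [Fintype V]
    (P : X × B → ℝ) (W : V → X → ℝ) {n : ℕ}
    (F : (Fin n → X) → (Fin n → B) → (Fin n → V) → ℝ) :
    ∑ x : Fin n → X, ∑ b : Fin n → B, ∑ v : Fin n → V,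
      (∏ t, P (x t, b t)) * (∏ t, W (v t) (x t)) * F x b v =
    iidExp (fun z : X × B × V => P (z.1, z.2.1) * W z.2.2 z.1)
      (fun z : Fin n → X × B × V => F (fun t => (z t).1) (fun t => (z t).2.1)
        (fun t => (z t).2.2)) := by
  simp only [iidExp, prod_mul_distrib]
  have : ∀ f : (Fin n → X) → (Fin n → B) → (Fin n → V) → ℝ,
      ∑ x, ∑ b, ∑ v, f x b v =
        ∑ y : (Fin n → X) × (Fin n → B) × (Fin n → V), f y.1 y.2.1 y.2.2 := by
    intro f
    simp only [Fintype.sum_prod_type]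
  rw [this]
  exact Fintype.sum_equiv
    { toFun := fun y t => (y.1 t, y.2.1 t, y.2.2 t)
      invFun := fun z => (fun t => (z t).1, fun t => (z t).2.1, fun t => (z t).2.2)
      left_inv := fun _ => rfl
      right_inv := fun _ => rfl } _ _ fun _ => rfl

lemma sum_pair_prod_eq_one {X B : Type*} [Fintype X] [Fintype B] {P : X × B → ℝ}
    (hP1 : ∑ p, P p = 1) (n : ℕ) :
    ∑ x : Fin n → X, ∑ b : Fin n → B, ∏ t, P (x t, b t) = 1 := by
  have h : ∑ z : Fin n → X × B, ∏ t, P (z t) = 1 := by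
    rw [sum_prod_apply (fun _ => P)]
    simp [hP1]
  rw [← h, ← Fintype.sum_prod_type' (f := fun (x : Fin n → X) (b : Fin n → B) =>
    ∏ t, P (x t, b t))]
  exact Fintype.sum_equiv
    { toFun := fun y t => (y.1 t, y.2 t)
      invFun := fun z => (fun t => (z t).1, fun t => (z t).2)
      left_inv := fun _ => rfl
      right_inv := fun _ => rfl } _ _ fun _ => rfl

/-- Block code with rate above the difference of the two mean log-densities. -/
lemma exists_block_code {X B V Y : Type*} [Fintype X] [Fintype B] [Fintype V]
    (P : X × B → ℝ) (hP0 : ∀ p, 0 ≤ P p) (hP1 : ∑ p, P p = 1)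
    (W : V → X → ℝ) (hW0 : ∀ v x, 0 ≤ W v x) (hW1 : ∀ x, ∑ v, W v x = 1)
    (q : V → ℝ) (hq0 : ∀ v, 0 ≤ q v) (hq1 : ∑ v, q v = 1)
    (r : X → V → ℝ) (hr0 : ∀ x v, 0 ≤ r x v) (hqr : ∀ x v, q v * r x v ≤ W v x)
    (hPr : ∀ x b v, P (x, b) * (q v * r x v) = P (x, b) * W v x)
    (s : V → B → ℝ) (hs0 : ∀ v b, 0 ≤ s v b) (hs1 : ∀ b, ∑ v, q v * s v b ≤ 1)
    (hr : ∀ x b v, 0 < P (x, b) * W v x → 0 < r x v)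
    (hs : ∀ x b v, 0 < P (x, b) * W v x → 0 < s v b)
    (φ : V → B → Y) (d : X → Y → ℝ) {Δ : ℝ} (hΔ : 0 ≤ Δ)
    (hd0 : ∀ x y, 0 ≤ d x y) (hd1 : ∀ x y, d x y ≤ Δ) {ε : ℝ} (hε : 0 < ε) {R : ℝ}
    (hR : ∑ z : X × B × V, P (z.1, z.2.1) * W z.2.2 z.1 * Real.logb 2 (r z.1 z.2.2) -
      ∑ z : X × B × V, P (z.1, z.2.1) * W z.2.2 z.1 * Real.logb 2 (s z.2.2 z.2.1) + 5 * ε ≤ R)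
    (n : ℕ) :
    ∃ (enc : (Fin n → X) → Fin ⌈(2 : ℝ) ^ ((n : ℝ) * R)⌉₊ → ℝ)
      (dec : Fin ⌈(2 : ℝ) ^ ((n : ℝ) * R)⌉₊ → (Fin n → B) → Fin n → Y),
      (∀ x, (∀ m, 0 ≤ enc x m) ∧ ∑ m, enc x m = 1) ∧
      (0 < n → ∑ x : Fin n → X, ∑ b : Fin n → B, (∏ t, P (x t, b t)) *
          ∑ m, enc x m * ((n : ℝ)⁻¹ * ∑ t, d (x t) (dec m b t)) ≤
        ∑ z : X × B × V, P (z.1, z.2.1) * W z.2.2 z.1 * d z.1 (φ z.2.2 z.2.1) +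
        Δ * ((∑ z : X × B × V, P (z.1, z.2.1) * W z.2.2 z.1 * Real.logb 2 (r z.1 z.2.2) ^ 2) /
              (n * ε ^ 2) +
            (∑ z : X × B × V, P (z.1, z.2.1) * W z.2.2 z.1 * Real.logb 2 (s z.2.2 z.2.1) ^ 2) /
              (n * ε ^ 2) + 3 * ((2 : ℝ) ^ (-ε)) ^ n)) := by
  set p : X × B × V → ℝ := fun z => P (z.1, z.2.1) * W z.2.2 z.1 with hp
  have hp0 : ∀ z, 0 ≤ p z := fun z => mul_nonneg (hP0 _) (hW0 _ _)
  have hp1 : ∑ z, p z = 1 := by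
    simp only [hp, Fintype.sum_prod_type, ← mul_sum, hW1, mul_one]
    rw [← hP1, Fintype.sum_prod_type]
  set Ir := ∑ z : X × B × V, p z * Real.logb 2 (r z.1 z.2.2) with hIr
  set Is := ∑ z : X × B × V, p z * Real.logb 2 (s z.2.2 z.2.1) with hIs
  have two_pos : ∀ a : ℝ, 0 < (2 : ℝ) ^ a := fun a => Real.rpow_pos_of_pos (by norm_num) a
  have hM : 0 < ⌈(2 : ℝ) ^ ((n : ℝ) * R)⌉₊ := Nat.ceil_pos.2 (two_pos _)
  have hK : 0 < ⌈(2 : ℝ) ^ ((n : ℝ) * (Is - 2 * ε))⌉₊ := Nat.ceil_pos.2 (two_pos _)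
  have hone : ∀ f : V → ℝ, ∑ v : Fin n → V, ∏ t, f (v t) = (∑ v, f v) ^ n := fun f => by
    rw [sum_prod_apply (fun _ => f)]
    simp
  obtain ⟨enc, dec, henc, hcost⟩ := exists_code_one_shot
    (X := Fin n → X) (B := Fin n → B) (V := Fin n → V) (Y := Fin n → Y)
    (fun x b => ∏ t, P (x t, b t)) (fun x b => prod_nonneg fun t _ => hP0 _)
    (sum_pair_prod_eq_one hP1 n)
    (fun v x => ∏ t, W (v t) (x t))
    (fun x => by rw [sum_prod_apply (fun t v => W v (x t))]; simp [hW1])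
    (fun v => ∏ t, q (v t)) (fun v => prod_nonneg fun t _ => hq0 _) (by simp [hone, hq1])
    (fun x v => ∏ t, r (x t) (v t)) (fun x v => prod_nonneg fun t _ => hr0 _ _)
    (fun x v => by
      rw [← prod_mul_distrib]
      exact prod_le_prod (fun t _ => mul_nonneg (hq0 _) (hr0 _ _)) fun t _ => hqr _ _)
    (fun x b v => by simp only [← prod_mul_distrib, hPr])
    (fun v b => ∏ t, s (v t) (b t)) (fun v b => prod_nonneg fun t _ => hs0 _ _)
    (fun b => by
      simp only [← prod_mul_distrib]
      rw [sum_prod_apply (fun t v => q v * s v (b t))]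
      exact prod_le_one (fun t _ => sum_nonneg fun v _ => mul_nonneg (hq0 _) (hs0 _ _))
        fun t _ => hs1 _)
    (fun v b t => φ (v t) (b t)) (fun x y => (n : ℝ)⁻¹ * ∑ t, d (x t) (y t)) hΔ
    (fun x y => mul_nonneg (by positivity) (sum_nonneg fun t _ => hd0 _ _))
    (fun x y => by
      rcases Nat.eq_zero_or_pos n with rfl | hn
      · simpa using hΔ
      · rw [inv_mul_le_iff₀ (by exact_mod_cast hn)]
        refine (sum_le_sum fun t _ => hd1 _ _).trans (by simp))
    hM hK (two_pos ((n : ℝ) * (Ir + ε))) (two_pos ((n : ℝ) * (Is - ε))) (two_pos (-(n * ε)))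
  refine ⟨enc, dec, henc, fun hn => hcost.trans ?_⟩
  have hn' : (n : ℝ) ≠ 0 := by exact_mod_cast hn.ne'
  have hpow : ((2 : ℝ) ^ (-ε)) ^ n = (2 : ℝ) ^ (-(n * ε)) := by
    rw [← Real.rpow_natCast, ← Real.rpow_mul (by norm_num)]
    congr 1; ring
  rw [sum_triple_eq_iidExp P W (fun x b v => (n : ℝ)⁻¹ * ∑ t, d (x t) (φ (v t) (b t)) +
      Δ * ((if (2 : ℝ) ^ ((n : ℝ) * (Ir + ε)) < ∏ t, r (x t) (v t) then 1 else 0) +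
        if ∏ t, s (v t) (b t) ≤ (2 : ℝ) ^ ((n : ℝ) * (Is - ε)) then 1 else 0)), ← hp]
  rw [iidExp_add, iidExp_const_mul, iidExp_const_mul, iidExp_sum, iidExp_add]
  have h1 := iidExp_rpow_lt_prod_le hp0 hp1 (r := fun z => r z.1 z.2.2)
    (fun z hz => hr _ _ _ hz) hε hn
  have h2 := iidExp_prod_le_rpow_le hp0 hp1 (s := fun z => s z.2.2 z.2.1)
    (fun z hz => hs _ _ _ hz) hε hn
  have h3 : (n : ℝ)⁻¹ * ∑ t : Fin n, iidExp p (fun c => d (c t).1 (φ (c t).2.2 (c t).2.1)) =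
      ∑ z, p z * d z.1 (φ z.2.2 z.2.1) := by
    have : ∀ t : Fin n, iidExp p (fun c => d (c t).1 (φ (c t).2.2 (c t).2.1)) =
        ∑ z, p z * d z.1 (φ z.2.2 z.2.1) := fun t =>
      iidExp_apply hp1 t (fun z => d z.1 (φ z.2.2 z.2.1))
    simp only [this, sum_const, card_univ, Fintype.card_fin, nsmul_eq_mul]
    field_simp
  have h4 : (2 : ℝ) ^ ((n : ℝ) * (Ir + ε)) /
      ((⌈(2 : ℝ) ^ ((n : ℝ) * R)⌉₊ * ⌈(2 : ℝ) ^ ((n : ℝ) * (Is - 2 * ε))⌉₊ : ℕ) *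
        (2 : ℝ) ^ (-(n * ε))) ≤ (2 : ℝ) ^ (-(n * ε)) := by
    rw [div_le_iff₀ (mul_pos (by exact_mod_cast Nat.mul_pos hM hK) (two_pos _))]
    calc (2 : ℝ) ^ ((n : ℝ) * (Ir + ε)) ≤ (2 : ℝ) ^ (-(n * ε)) *
          (((2 : ℝ) ^ ((n : ℝ) * R) * (2 : ℝ) ^ ((n : ℝ) * (Is - 2 * ε))) *
            (2 : ℝ) ^ (-(n * ε))) := by
          simp only [← Real.rpow_add (zero_lt_two' ℝ)]
          refine Real.rpow_le_rpow_of_exponent_le (by norm_num) ?_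
          have := mul_le_mul_of_nonneg_left hR n.cast_nonneg
          linarith
      _ ≤ _ := by
          rw [Nat.cast_mul]
          have a1 := Nat.le_ceil ((2 : ℝ) ^ ((n : ℝ) * R))
          have a2 := Nat.le_ceil ((2 : ℝ) ^ ((n : ℝ) * (Is - 2 * ε)))
          gcongr
  have h5 : ((⌈(2 : ℝ) ^ ((n : ℝ) * (Is - 2 * ε))⌉₊ : ℝ) - 1) / (2 : ℝ) ^ ((n : ℝ) * (Is - ε))
      ≤ (2 : ℝ) ^ (-(n * ε)) := by
    rw [div_le_iff₀ (two_pos _), ← Real.rpow_add (by norm_num)]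
    have a := (Nat.ceil_lt_add_one (two_pos ((n : ℝ) * (Is - 2 * ε))).le).le
    have e : -(n * ε) + n * (Is - ε) = n * (Is - 2 * ε) := by ring
    rw [e]
    linarith
  rw [h3, hpow, add_assoc, ← mul_add]
  gcongr
  linarith

end Block

section SingleLetter

variable {X B V : Type*} [Fintype X] [Fintype B] [Fintype V]

lemma condMutInf_eq_sub {P : X × B → ℝ} (hP0 : ∀ p, 0 ≤ P p) {W : V → X → ℝ}
    (hW0 : ∀ v x, 0 ≤ W v x) (hW1 : ∀ x, ∑ v, W v x = 1)
    {q : V → ℝ} (hq : ∀ x b v, 0 < P (x, b) * W v x → 0 < q v) :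
    condMutInf (fun x v b => P (x, b) * W v x) =
      ∑ z : X × B × V, P (z.1, z.2.1) * W z.2.2 z.1 * Real.logb 2 (W z.2.2 z.1 / q z.2.2) -
      ∑ z : X × B × V, P (z.1, z.2.1) * W z.2.2 z.1 *
        Real.logb 2 ((∑ x, P (x, z.2.1) * W z.2.2 x) / (q z.2.2 * ∑ x, P (x, z.2.1))) := by
  rw [← sum_sub_distrib, Fintype.sum_prod_type, condMutInf]
  refine sum_congr rfl fun x _ => ?_
  rw [Fintype.sum_prod_type, sum_comm]
  refine sum_congr rfl fun b _ => sum_congr rfl fun v _ => ?_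
  simp only [← mul_sum, hW1, mul_one]
  rw [← mul_sub]
  rcases (mul_nonneg (hP0 (x, b)) (hW0 v x)).eq_or_lt with h | h
  · rw [← h, zero_mul, zero_mul]
  have hPx : 0 < P (x, b) := pos_of_mul_pos_left h (hW0 _ _)
  have hWx : 0 < W v x := pos_of_mul_pos_right h (hP0 _)
  have hqv := hq x b v h
  have hPb : 0 < ∑ x', P (x', b) :=
    hPx.trans_le (single_le_sum (f := fun x' => P (x', b)) (fun _ _ => hP0 _) (mem_univ x))
  have hvb : 0 < ∑ x', P (x', b) * W v x' :=
    h.trans_le (single_le_sum (f := fun x' => P (x', b) * W v x')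
      (fun _ _ => mul_nonneg (hP0 _) (hW0 _ _)) (mem_univ x))
  rw [← Real.logb_div (by positivity) (by positivity)]
  congr 2
  field_simp

end SingleLetter

/-- Wyner–Ziv achievability: Let `P̄_{XB}` be a joint source pmf
on the finite set `X × B`, `d : X × Y → ℝ≥0` a distortion measure, `P̄_{V|X}` a
test channel and `φ : V × B → Y` a reconstruction function such that under the
joint pmf `P̄(v,x,b) = P̄_{XB}(x,b) P̄_{V|X}(v|x)` (so `V − X − B` is Markov) we
have `E_{P̄}[d(X, φ(V,B))] ≤ D`.  Then every rate `R > I_{P̄}(X;V|B)` is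
achievable for distortion `D`: there are message-set sizes `Msize n ≤ ⌈2^{nR}⌉`,
stochastic encoders `enc n : Xⁿ → Fin (Msize n)` and stochastic decoders
`dec n : Fin (Msize n) × Bⁿ → Yⁿ` (given as Markov kernels) with
`limsup_n E[(1/n) ∑ₜ d(Xₜ,Yₜ)] ≤ D` for the i.i.d. source `(Xₜ,Bₜ) ∼ P̄_{XB}`. -/
theorem wyner_ziv_achievability
    {X B Y V : Type*} [Fintype X] [Fintype B] [Fintype Y] [Fintype V]
    (Pxb : X × B → ℝ)
    (hPxb0 : ∀ p, 0 ≤ Pxb p) (hPxb1 : ∑ p, Pxb p = 1)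
    (W : V → X → ℝ)
    (hW0 : ∀ v x, 0 ≤ W v x) (hW1 : ∀ x, ∑ v, W v x = 1)
    (φ : V → B → Y) (d : X → Y → ℝ) (hd : ∀ x y, 0 ≤ d x y)
    (D : ℝ)
    (hD : ∑ v, ∑ x, ∑ b, Pxb (x, b) * W v x * d x (φ v b) ≤ D)
    (R : ℝ)
    (hR : R > condMutInf (fun x v b => Pxb (x, b) * W v x)) :
    ∃ Msize : ℕ → ℕ,
      (∀ n, Msize n ≤ Nat.ceil ((2 : ℝ) ^ ((n : ℝ) * R))) ∧
      ∃ (enc : ∀ n : ℕ, (Fin n → X) → Fin (Msize n) → ℝ)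
        (dec : ∀ n : ℕ, Fin (Msize n) → (Fin n → B) → (Fin n → Y) → ℝ),
        (∀ n xn, (∀ m, 0 ≤ enc n xn m) ∧ ∑ m, enc n xn m = 1) ∧
        (∀ n m bn, (∀ yn, 0 ≤ dec n m bn yn) ∧ ∑ yn, dec n m bn yn = 1) ∧
        Filter.atTop.limsup
          (fun n : ℕ =>
            ∑ xn : Fin n → X, ∑ bn : Fin n → B,
              (∏ t, Pxb (xn t, bn t)) *
                ∑ m, enc n xn m *
                  ∑ yn : Fin n → Y, dec n m bn yn *
                    ((n : ℝ)⁻¹ * ∑ t, d (xn t) (yn t)))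
          ≤ D := by
  classical
  set q : V → ℝ := fun v => ∑ x, ∑ b, Pxb (x, b) * W v x with hqdef
  set pvb : V → B → ℝ := fun v b => ∑ x, Pxb (x, b) * W v x with hpvb
  set pb : B → ℝ := fun b => ∑ x, Pxb (x, b) with hpb
  have hterm : ∀ x b v, 0 ≤ Pxb (x, b) * W v x := fun x b v => mul_nonneg (hPxb0 _) (hW0 _ _)
  have hq0 : ∀ v, 0 ≤ q v := fun v => sum_nonneg fun x _ => sum_nonneg fun b _ => hterm x b v
  have hpvb0 : ∀ v b, 0 ≤ pvb v b := fun v b => sum_nonneg fun x _ => hterm x b v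
  have hpb0 : ∀ b, 0 ≤ pb b := fun b => sum_nonneg fun x _ => hPxb0 _
  have hPq : ∀ x b v, Pxb (x, b) * W v x ≤ q v := fun x b v =>
    (single_le_sum (f := fun b => Pxb (x, b) * W v x) (fun b _ => hterm x b v)
      (mem_univ b)).trans
    (single_le_sum (f := fun x => ∑ b, Pxb (x, b) * W v x)
      (fun x _ => sum_nonneg fun b _ => hterm x b v) (mem_univ x))
  have hPvb : ∀ x b v, Pxb (x, b) * W v x ≤ pvb v b := fun x b v =>
    single_le_sum (f := fun x => Pxb (x, b) * W v x) (fun x _ => hterm x b v) (mem_univ x)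
  have hPb : ∀ x b, Pxb (x, b) ≤ pb b := fun x b =>
    single_le_sum (f := fun x => Pxb (x, b)) (fun x _ => hPxb0 _) (mem_univ x)
  have hq1 : ∑ v, q v = 1 := by
    simp only [hqdef]
    rw [sum_comm, ← hPxb1, Fintype.sum_prod_type]
    refine sum_congr rfl fun x _ => ?_
    rw [sum_comm]
    exact sum_congr rfl fun b _ => by rw [← mul_sum, hW1, mul_one]
  have hpos : ∀ x b v, 0 < Pxb (x, b) * W v x → 0 < q v := fun x b v h => h.trans_le (hPq x b v)
  set Δ := ∑ x, ∑ y, d x y with hΔ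
  have hΔ0 : 0 ≤ Δ := sum_nonneg fun x _ => sum_nonneg fun y _ => hd x y
  have hd1 : ∀ x y, d x y ≤ Δ := fun x y =>
    (single_le_sum (f := fun y => d x y) (fun y _ => hd x y) (mem_univ y)).trans
    (single_le_sum (f := fun x => ∑ y, d x y) (fun x _ => sum_nonneg fun y _ => hd x y)
      (mem_univ x))
  set ε := (R - condMutInf (fun x v b => Pxb (x, b) * W v x)) / 5 with hεdef
  have hε : 0 < ε := by rw [hεdef]; linarith
  have hI := condMutInf_eq_sub hPxb0 hW0 hW1 hpos
  choose enc dec henc hcost using exists_block_code Pxb hPxb0 hPxb1 W hW0 hW1 q hq0 hq1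
    (fun x v => W v x / q v) (fun x v => div_nonneg (hW0 _ _) (hq0 _))
    (fun x v => by
      rcases (hq0 v).eq_or_lt with h | h
      · rw [← h, zero_mul]; exact hW0 v x
      · exact (mul_div_cancel₀ _ h.ne').le)
    (fun x b v => by
      rcases (hq0 v).eq_or_lt with h | h
      · rw [← h, zero_mul, mul_zero]
        exact le_antisymm (hterm x b v) (h ▸ hPq x b v)
      · rw [mul_div_cancel₀ _ h.ne'])
    (fun v b => pvb v b / (q v * pb b))
    (fun v b => div_nonneg (hpvb0 _ _) (mul_nonneg (hq0 _) (hpb0 _)))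
    (fun b => by
      have h1 : ∑ v, pvb v b = pb b := by
        simp only [hpvb, hpb]
        rw [sum_comm]
        exact sum_congr rfl fun x _ => by rw [← mul_sum, hW1, mul_one]
      calc ∑ v, q v * (pvb v b / (q v * pb b)) ≤ ∑ v, pvb v b / pb b := by
            refine sum_le_sum fun v _ => ?_
            rcases (hq0 v).eq_or_lt with h | h
            · rw [← h, zero_mul]; exact div_nonneg (hpvb0 _ _) (hpb0 _)
            · rw [← mul_div_assoc, mul_div_mul_left _ _ h.ne']
        _ = pb b / pb b := by rw [← sum_div, h1]
        _ ≤ 1 := div_self_le_one _)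
    (fun x b v h => div_pos (pos_of_mul_pos_right h (hPxb0 _)) (hpos x b v h))
    (fun x b v h => div_pos (h.trans_le (hPvb x b v)) (mul_pos (hpos x b v h)
      ((pos_of_mul_pos_left h (hW0 _ _)).trans_le (hPb x b))))
    φ d hΔ0 hd hd1 hε (R := R) (by rw [← hI, hεdef]; linarith)
  refine ⟨fun n => ⌈(2 : ℝ) ^ ((n : ℝ) * R)⌉₊, fun n => le_rfl, enc,
    fun n m b y => if y = dec n m b then 1 else 0, henc,
    fun n m b => ⟨fun y => by dsimp only; split_ifs <;> norm_num, by simp⟩, ?_⟩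
  simp only [ite_mul, one_mul, zero_mul, sum_ite_eq', mem_univ, if_true]
  have hDz : ∑ z : X × B × V, Pxb (z.1, z.2.1) * W z.2.2 z.1 * d z.1 (φ z.2.2 z.2.1) ≤ D := by
    refine le_trans (le_of_eq ?_) hD
    simp only [Fintype.sum_prod_type]
    symm
    rw [sum_comm]
    exact sum_congr rfl fun x _ => sum_comm
  set C₁ := ∑ z : X × B × V, Pxb (z.1, z.2.1) * W z.2.2 z.1 *
    Real.logb 2 (W z.2.2 z.1 / q z.2.2) ^ 2
  set C₂ := ∑ z : X × B × V, Pxb (z.1, z.2.1) * W z.2.2 z.1 *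
    Real.logb 2 (pvb z.2.2 z.2.1 / (q z.2.2 * pb z.2.1)) ^ 2
  have hlim : Filter.Tendsto (fun n : ℕ => D + Δ * (C₁ / (n * ε ^ 2) + C₂ / (n * ε ^ 2) +
      3 * ((2 : ℝ) ^ (-ε)) ^ n)) Filter.atTop (nhds D) := by
    have hden : Filter.Tendsto (fun n : ℕ => (n : ℝ) * ε ^ 2) Filter.atTop Filter.atTop :=
      tendsto_natCast_atTop_atTop.atTop_mul_const (by positivity)
    have hgeo : Filter.Tendsto (fun n : ℕ => ((2 : ℝ) ^ (-ε)) ^ n) Filter.atTop (nhds 0) :=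
      tendsto_pow_atTop_nhds_zero_of_lt_one (by positivity)
        (Real.rpow_lt_one_of_one_lt_of_neg (by norm_num) (by linarith))
    simpa using (((hden.const_div_atTop C₁).add (hden.const_div_atTop C₂)).add
      (hgeo.const_mul 3)).const_mul Δ |>.const_add D
  rw [← hlim.limsup_eq]
  refine Filter.limsup_le_limsup ?_ ?_ hlim.isBoundedUnder_le
  · filter_upwards [Filter.eventually_gt_atTop 0] with n hn
    exact (hcost n hn).trans (by gcongr)
  · refine Filter.IsBoundedUnder.isCoboundedUnder_le ⟨0, Filter.eventually_map.2
      (Filter.Eventually.of_forall fun n => ?_)⟩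
    refine sum_nonneg fun x _ => sum_nonneg fun b _ => mul_nonneg
      (prod_nonneg fun t _ => hPxb0 _) (sum_nonneg fun m _ => mul_nonneg ((henc n x).1 m)
        (mul_nonneg (by positivity) (sum_nonneg fun t _ => hd _ _)))
end

section
/- (Berger-Tung corner point achievability.) Let X₁, X₂, U₁, U₂, Y₁, Y₂ be finite sets, let P̄_{X₁X₂} be a joint pmf, let P̄_{U₁|X₁} and P̄_{U₂|X₂} be conditional pmfs, and define the joint pmf P̄(u₁, x₁, x₂, u₂) = P̄_{X₁X₂}(x₁,x₂) P̄_{U₁|X₁}(u₁|x₁) P̄_{U₂|X₂}(u₂|x₂) (so that U₁ − X₁ − X₂ − U₂ forms a Markov chain). Let d_k : X_k × Y_k → ℝ≥0 (k = 1, 2) be distortion measures and φ_k : U₁ × U₂ → Y_k functions with E_{P̄}[ d_k(X_k, φ_k(U₁, U₂)) ] ≤ D_k for k = 1, 2. Then any rate pair (R₁, R₂) with R₁ > I_{P̄}(X₁; U₁) and R₂ > I_{P̄}(X₂; U₂ | U₁) is achievable under distortion levels (D₁, D₂): there exist sequences of (possibly stochastic) encoders f₁ₙ : X₁^n → M₁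 with |M₁| ≤ ⌈2^{nR₁}⌉ and f₂ₙ : X₂^n → M₂ with |M₂| ≤ ⌈2^{nR₂}⌉, and a (possibly stochastic) decoder gₙ : M₁ × M₂ → Y₁^n × Y₂^n, such that for the i.i.d. sources (X₁ₜ, X₂ₜ) ~ P̄_{X₁X₂}, lim sup_n E[ (1/n) ∑_{t=1}^n d_k(X_{k,t}, Y_{k,t}) ] ≤ D_k for k = 1, 2. -/
open Finset

namespace BergerTung

section IID

variable {ι A : Type*} [Fintype ι] [DecidableEq ι] [Fintype A]

lemma sum_pi_prod (f : ι → A → ℝ) :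
    ∑ c : ι → A, ∏ i, f i (c i) = ∏ i, ∑ a, f i a := by
  rw [Finset.prod_univ_sum, Fintype.piFinset_univ]

lemma sum_iid {q : A → ℝ} (hq : ∑ a, q a = 1) :
    ∑ c : ι → A, ∏ i, q (c i) = 1 := by
  rw [sum_pi_prod (fun _ => q)]
  simp [hq]

lemma sum_iid_mul {q : A → ℝ} (hq : ∑ a, q a = 1) (i : ι) (f : A → ℝ) :
    ∑ c : ι → A, (∏ k, q (c k)) * f (c i) = ∑ a, q a * f a := by
  have h : ∀ c : ι → A, (∏ k, q (c k)) * f (c i)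
      = ∏ k, (q (c k) * if k = i then f (c k) else 1) := by
    intro c
    rw [Finset.prod_mul_distrib]
    simp
  simp_rw [h]
  rw [sum_pi_prod (fun k a => q a * if k = i then f a else 1),
    Finset.prod_eq_single i]
  · simp
  · intro k _ hk
    simp [hk, hq]
  · simp

lemma sum_iid_mul_mul {q : A → ℝ} (hq : ∑ a, q a = 1) {i j : ι} (hij : i ≠ j) (f g : A → ℝ) :
    ∑ c : ι → A, (∏ k, q (c k)) * (f (c i) * g (c j))
      = (∑ a, q a * f a) * ∑ a, q a * g a := by
  have h : ∀ c : ι → A, (∏ k, q (c k)) * (f (c i) * g (c j))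
      = ∏ k, (q (c k) * ((if k = i then f (c k) else 1) * if k = j then g (c k) else 1)) := by
    intro c
    rw [Finset.prod_mul_distrib, Finset.prod_mul_distrib]
    simp
  simp_rw [h]
  rw [sum_pi_prod (fun k a => q a * ((if k = i then f a else 1) * if k = j then g a else 1)),
    ← Finset.prod_subset (Finset.subset_univ {i, j}), Finset.prod_pair hij]
  · simp [hij, hij.symm]
  · intro k _ hk
    simp only [Finset.mem_insert, Finset.mem_singleton, not_or] at hk
    simp [hk.1, hk.2, hq]

lemma sum_iid_mul_sq {q : A → ℝ} (hq : ∑ a, q a = 1) {f : A → ℝ} (hf : ∑ a, q a * f a = 0) :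
    ∑ c : ι → A, (∏ k, q (c k)) * (∑ i, f (c i)) ^ 2
      = Fintype.card ι * ∑ a, q a * f a ^ 2 := by
  simp_rw [sq, Finset.sum_mul_sum, Finset.mul_sum]
  rw [Finset.sum_comm]
  have h : ∀ i : ι, ∑ c : ι → A, ∑ j, (∏ k, q (c k)) * (f (c i) * f (c j))
      = ∑ a, q a * (f a * f a) := by
    intro i
    rw [Finset.sum_comm, Finset.sum_eq_single i]
    · exact sum_iid_mul hq i (fun a => f a * f a)
    · intro j _ hj
      rw [sum_iid_mul_mul hq hj.symm f f, hf, zero_mul]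
    · simp
  rw [Finset.sum_congr rfl (fun i _ => h i)]
  simp [Finset.mul_sum]

lemma exists_le_of_weighted_sum_le {C : Type*} [Fintype C] {w F : C → ℝ} {b : ℝ}
    (hw : ∀ c, 0 ≤ w c) (hw1 : ∑ c, w c = 1) (h : ∑ c, w c * F c ≤ b) : ∃ c, F c ≤ b := by
  by_contra! hlt
  have h0 : ∑ c, w c * (F c - b) ≤ 0 := by
    simp_rw [mul_sub]
    rw [Finset.sum_sub_distrib, ← Finset.sum_mul, hw1]
    linarith
  have hnn : ∀ c ∈ Finset.univ, 0 ≤ w c * (F c - b) := fun c _ =>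
    mul_nonneg (hw c) (by linarith [hlt c])
  have hz := (Finset.sum_eq_zero_iff_of_nonneg hnn).1 (le_antisymm h0 (Finset.sum_nonneg hnn))
  have hw0 : ∀ c, w c = 0 := by
    intro c
    rcases mul_eq_zero.1 (hz c (Finset.mem_univ c)) with h | h
    · exact h
    · linarith [hlt c]
  simp [hw0] at hw1

end IID

section Covering

variable {A B ι : Type*} [Fintype A] [Fintype B] [Fintype ι] [DecidableEq ι] [Nonempty ι]

open Classical in
/-- Soft covering: the output distribution induced by a random codebook `c : ι → B` with i.i.d.
entries is close in total variation to the target marginal. -/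
lemma soft_covering {J : A → B → ℝ} (hJ : ∀ x u, 0 ≤ J x u) {p : A → ℝ} {q : B → ℝ}
    (hp : ∀ x, ∑ u, J x u = p x) (hq : ∀ u, ∑ x, J x u = q u)
    (hp1 : ∑ x, p x = 1) {T : ℝ} (hT : 0 ≤ T) :
    ∑ c : ι → B, (∏ i, q (c i)) *
        ∑ x, |p x - ∑ i, (Fintype.card ι : ℝ)⁻¹ * (J x (c i) / q (c i))|
      ≤ 2 * (∑ x, ∑ u, J x u * if T * (p x * q u) < J x u then 1 else 0)
        + √(T / Fintype.card ι) := by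
  have hp0 : ∀ x, 0 ≤ p x := fun x => hp x ▸ Finset.sum_nonneg fun u _ => hJ x u
  have hq0 : ∀ u, 0 ≤ q u := fun u => hq u ▸ Finset.sum_nonneg fun x _ => hJ x u
  have hJq : ∀ x u, J x u ≤ q u := fun x u => hq u ▸
    Finset.single_le_sum (f := fun x => J x u) (fun x _ => hJ x u) (Finset.mem_univ x)
  have hq1 : ∑ u, q u = 1 := by
    simp_rw [← hq]; rw [Finset.sum_comm]; simp_rw [hp, hp1]
  have hcancel : ∀ x u, q u * (J x u / q u) = J x u := by
    intro x u
    rcases (hq0 u).eq_or_lt with h | h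
    · have : J x u = 0 := le_antisymm (by rw [h]; exact hJq x u) (hJ x u)
      simp [this]
    · field_simp
  obtain ⟨M, hM⟩ : ∃ M : ℝ, M = (Fintype.card ι : ℝ) := ⟨_, rfl⟩
  rw [← hM]
  have hM0 : 0 < M := by rw [hM]; exact_mod_cast Fintype.card_pos
  have hw0 : ∀ c : ι → B, 0 ≤ ∏ i, q (c i) := fun c => Finset.prod_nonneg fun i _ => hq0 _
  have hw1 : ∑ c : ι → B, ∏ i, q (c i) = 1 := sum_iid hq1
  set b : A → B → ℝ := fun x u => if T * (p x * q u) < J x u then 1 else 0 with hb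
  set V : A → B → ℝ := fun x u => J x u / q u with hV
  have hV0 : ∀ x u, 0 ≤ V x u := fun x u => div_nonneg (hJ x u) (hq0 u)
  have hb0 : ∀ x u, 0 ≤ b x u := fun x u => by simp only [hb]; split_ifs <;> norm_num
  -- the part of the marginal carried by typical pairs
  set g : A → ℝ := fun x => ∑ u, J x u * (1 - b x u) with hg
  have hpg : ∀ x, p x = g x + ∑ u, J x u * b x u := by
    intro x
    rw [← hp x, hg, ← Finset.sum_add_distrib]
    exact Finset.sum_congr rfl fun u _ => by ring
  have hatyp : ∀ x, ∑ c : ι → B, (∏ i, q (c i)) * ∑ i, M⁻¹ * (V x (c i) * b x (c i))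
      = ∑ u, J x u * b x u := by
    intro x
    simp_rw [Finset.mul_sum]
    rw [Finset.sum_comm]
    have : ∀ i : ι, ∑ c : ι → B, (∏ i, q (c i)) * (M⁻¹ * (V x (c i) * b x (c i)))
        = M⁻¹ * ∑ u, J x u * b x u := by
      intro i
      rw [sum_iid_mul hq1 i (fun u => M⁻¹ * (V x u * b x u)), Finset.mul_sum]
      refine Finset.sum_congr rfl fun u _ => ?_
      rw [← hcancel x u]; ring
    rw [Finset.sum_congr rfl fun i _ => this i]
    simp only [Finset.sum_const, Finset.card_univ, nsmul_eq_mul, ← hM]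
    field_simp
  have htyp : ∀ x, ∑ c : ι → B, (∏ i, q (c i)) *
      |g x - ∑ i, M⁻¹ * (V x (c i) * (1 - b x (c i)))| ≤ p x * √(T / M) := by
    intro x
    set f : B → ℝ := fun u => V x u * (1 - b x u) - g x with hf
    have hqV : ∑ u, q u * (V x u * (1 - b x u)) = g x := by
      refine Finset.sum_congr rfl fun u _ => ?_
      rw [← mul_assoc, hcancel]
    have hfmean : ∑ u, q u * f u = 0 := by
      simp_rw [hf, mul_sub (q _) (_ * _)]
      rw [Finset.sum_sub_distrib, hqV, ← Finset.sum_mul, hq1]; ring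
    have hvar : ∑ u, q u * f u ^ 2 ≤ T * p x ^ 2 := by
      have h1 : ∑ u, q u * f u ^ 2
          = ∑ u, q u * (V x u * (1 - b x u)) ^ 2 - g x ^ 2 := by
        have : ∀ u, q u * f u ^ 2 = q u * (V x u * (1 - b x u)) ^ 2
            - 2 * g x * (q u * (V x u * (1 - b x u))) + g x ^ 2 * q u := by
          intro u; simp only [hf]; ring
        simp_rw [this]
        rw [Finset.sum_add_distrib, Finset.sum_sub_distrib, ← Finset.mul_sum, hqV,
          ← Finset.mul_sum, hq1]; ring
      have h2 : ∑ u, q u * (V x u * (1 - b x u)) ^ 2 ≤ ∑ u, J x u * (T * p x) := by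
        refine Finset.sum_le_sum fun u _ => ?_
        by_cases hlt : T * (p x * q u) < J x u
        · have : b x u = 1 := by simp [hb, hlt]
          rw [this]
          have := mul_nonneg (hJ x u) (mul_nonneg hT (hp0 x))
          simpa using this
        · have hb' : b x u = 0 := by simp [hb, hlt]
          have : q u * (V x u * (1 - b x u)) ^ 2 = J x u * V x u := by
            rw [hb', ← hcancel x u]; ring
          rw [this]
          refine mul_le_mul_of_nonneg_left ?_ (hJ x u)
          refine div_le_of_le_mul₀ (hq0 u) (mul_nonneg hT (hp0 x)) ?_
          rw [mul_assoc]; exact not_lt.1 hlt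
      rw [← Finset.sum_mul, hp x] at h2
      nlinarith [sq_nonneg (g x)]
    have hdev : ∀ c : ι → B, g x - ∑ i, M⁻¹ * (V x (c i) * (1 - b x (c i)))
        = - (M⁻¹ * ∑ i, f (c i)) := by
      intro c
      simp only [hf, Finset.sum_sub_distrib, Finset.sum_const, Finset.card_univ, nsmul_eq_mul,
        ← hM, mul_sub, ← Finset.mul_sum]
      field_simp
      ring
    have hsq : ∑ c : ι → B, (∏ i, q (c i)) *
        |g x - ∑ i, M⁻¹ * (V x (c i) * (1 - b x (c i)))| ^ 2 ≤ p x ^ 2 * (T / M) := by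
      have : ∀ c : ι → B, (∏ i, q (c i)) *
          |g x - ∑ i, M⁻¹ * (V x (c i) * (1 - b x (c i)))| ^ 2
          = M⁻¹ ^ 2 * ((∏ i, q (c i)) * (∑ i, f (c i)) ^ 2) := by
        intro c; rw [hdev, sq_abs]; ring
      simp_rw [this]
      rw [← Finset.mul_sum, sum_iid_mul_sq hq1 hfmean, ← hM]
      calc M⁻¹ ^ 2 * (M * ∑ u, q u * f u ^ 2) = M⁻¹ * ∑ u, q u * f u ^ 2 := by
            field_simp
        _ ≤ M⁻¹ * (T * p x ^ 2) := mul_le_mul_of_nonneg_left hvar (by positivity)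
        _ = _ := by ring
    refine le_of_sq_le_sq ?_ (mul_nonneg (hp0 x) (Real.sqrt_nonneg _))
    rw [mul_pow, Real.sq_sqrt (div_nonneg hT hM0.le)]
    refine le_trans ?_ hsq
    have hcs := Finset.sum_sq_le_sum_mul_sum_of_sq_le_mul (Finset.univ : Finset (ι → B))
      (r := fun c => (∏ i, q (c i)) * |g x - ∑ i, M⁻¹ * (V x (c i) * (1 - b x (c i)))|)
      (f := fun c => ∏ i, q (c i))
      (g := fun c => (∏ i, q (c i)) * |g x - ∑ i, M⁻¹ * (V x (c i) * (1 - b x (c i)))| ^ 2)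
      (fun c _ => hw0 c) (fun c _ => mul_nonneg (hw0 c) (sq_nonneg _)) (fun c _ => by apply le_of_eq; ring)
    rwa [hw1, one_mul] at hcs
  have hx : ∀ x, ∑ c : ι → B, (∏ i, q (c i)) * |p x - ∑ i, M⁻¹ * V x (c i)|
      ≤ p x * √(T / M) + 2 * ∑ u, J x u * b x u := by
    intro x
    have : ∀ c : ι → B, (∏ i, q (c i)) * |p x - ∑ i, M⁻¹ * V x (c i)|
        ≤ (∏ i, q (c i)) * |g x - ∑ i, M⁻¹ * (V x (c i) * (1 - b x (c i)))|
          + (∏ i, q (c i)) * (∑ u, J x u * b x u)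
          + (∏ i, q (c i)) * ∑ i, M⁻¹ * (V x (c i) * b x (c i)) := by
      intro c
      rw [← mul_add, ← mul_add]
      refine mul_le_mul_of_nonneg_left ?_ (hw0 c)
      have h1 : ∑ i, M⁻¹ * V x (c i) = ∑ i, M⁻¹ * (V x (c i) * (1 - b x (c i)))
          + ∑ i, M⁻¹ * (V x (c i) * b x (c i)) := by
        rw [← Finset.sum_add_distrib]
        exact Finset.sum_congr rfl fun i _ => by ring
      have h2 : 0 ≤ ∑ u, J x u * b x u :=
        Finset.sum_nonneg fun u _ => mul_nonneg (hJ x u) (hb0 x u)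
      have h3 : 0 ≤ ∑ i, M⁻¹ * (V x (c i) * b x (c i)) :=
        Finset.sum_nonneg fun i _ => mul_nonneg (by positivity) (mul_nonneg (hV0 x _) (hb0 x _))
      rw [hpg x, h1]
      rw [abs_le]
      constructor
      · linarith [neg_abs_le (g x - ∑ i, M⁻¹ * (V x (c i) * (1 - b x (c i))))]
      · linarith [le_abs_self (g x - ∑ i, M⁻¹ * (V x (c i) * (1 - b x (c i))))]
    refine (Finset.sum_le_sum fun c _ => this c).trans ?_
    rw [Finset.sum_add_distrib, Finset.sum_add_distrib, hatyp, ← Finset.sum_mul, hw1]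
    linarith [htyp x]
  simp_rw [Finset.mul_sum (s := (Finset.univ : Finset A))]
  rw [Finset.sum_comm]
  refine (Finset.sum_le_sum fun x _ => hx x).trans ?_
  rw [Finset.sum_add_distrib, ← Finset.sum_mul, hp1]
  linarith

/-- The likelihood encoder. -/
lemma exists_likelihood_encoder {A ι : Type*} [Fintype ι] [Nonempty ι] (p : A → ℝ) {v : A → ι → ℝ}
    (hv : ∀ x i, 0 ≤ v x i) :
    ∃ E : A → ι → ℝ, (∀ x i, 0 ≤ E x i) ∧ (∀ x, ∑ i, E x i = 1) ∧
      ∀ x, ∑ i, |p x * E x i - v x i| ≤ |p x - ∑ i, v x i| := by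
  classical
  have key : ∀ x, ∃ e : ι → ℝ, (∀ i, 0 ≤ e i) ∧ ∑ i, e i = 1 ∧
      ∑ i, |p x * e i - v x i| ≤ |p x - ∑ i, v x i| := by
    intro x
    have hS : 0 ≤ ∑ i, v x i := Finset.sum_nonneg fun i _ => hv x i
    rcases hS.eq_or_lt with h | h
    · have hz : ∀ i, v x i = 0 := fun i =>
        (Finset.sum_eq_zero_iff_of_nonneg fun i _ => hv x i).1 h.symm i (Finset.mem_univ i)
      have hc : (0 : ℝ) < Fintype.card ι := by exact_mod_cast Fintype.card_pos
      refine ⟨fun _ => (Fintype.card ι : ℝ)⁻¹, fun i => by positivity, by simp, ?_⟩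
      simp only [hz, sub_zero, Finset.sum_const, Finset.card_univ, nsmul_eq_mul,
        abs_mul, abs_inv, Nat.abs_cast, mul_zero]
      apply le_of_eq
      field_simp
    · refine ⟨fun i => v x i / ∑ i, v x i, fun i => div_nonneg (hv x i) hS, ?_, ?_⟩
      · rw [← Finset.sum_div, div_self h.ne']
      · have : ∀ i, |p x * (v x i / ∑ i, v x i) - v x i|
            = v x i * (|p x - ∑ i, v x i| / ∑ i, v x i) := by
          intro i
          have e : p x * (v x i / ∑ i, v x i) - v x i
              = v x i * ((p x - ∑ i, v x i) / ∑ i, v x i) := by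
            field_simp
          rw [e, abs_mul, abs_of_nonneg (hv x i), abs_div, abs_of_pos h]
        simp_rw [this]
        rw [← Finset.sum_mul, mul_div_cancel₀ _ h.ne']
  choose E h1 h2 h3 using key
  exact ⟨E, h1, h2, h3⟩

lemma encoder_replacement {A ι Z : Type*} [Fintype A] [Fintype ι] [Fintype Z] {p : A → ℝ} {v E : A → ι → ℝ}
    (hE : ∀ x, ∑ i, |p x * E x i - v x i| ≤ |p x - ∑ i, v x i|)
    {N : Z → A → ℝ} (hN : ∀ z x, 0 ≤ N z x) (hNp : ∀ x, ∑ z, N z x = p x)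
    {S : Z → A → ι → ℝ} (hS0 : ∀ z x i, 0 ≤ S z x i) (hS1 : ∀ z x i, S z x i ≤ 1) :
    ∑ z, ∑ x, N z x * ∑ i, E x i * S z x i
      ≤ ∑ z, ∑ x, N z x / p x * ∑ i, v x i * S z x i + ∑ x, |p x - ∑ i, v x i| := by
  have hp : ∀ x, 0 ≤ p x := fun x => hNp x ▸ Finset.sum_nonneg fun z _ => hN z x
  have hNle : ∀ z x, N z x ≤ p x := fun z x => hNp x ▸
    Finset.single_le_sum (f := fun z => N z x) (fun z _ => hN z x) (Finset.mem_univ z)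
  have hpt : ∀ z x, N z x * ∑ i, E x i * S z x i
      ≤ N z x / p x * ∑ i, v x i * S z x i + N z x / p x * |p x - ∑ i, v x i| := by
    intro z x
    have hc : N z x = N z x / p x * p x := by
      rcases (hp x).eq_or_lt with h | h
      · have : N z x = 0 := le_antisymm (by rw [h]; exact hNle z x) (hN z x)
        simp [this]
      · field_simp
    calc N z x * ∑ i, E x i * S z x i
        = N z x / p x * ∑ i, p x * E x i * S z x i := by
          conv_lhs => rw [hc]
          rw [mul_assoc, Finset.mul_sum]
          simp_rw [mul_assoc]
      _ ≤ N z x / p x * ∑ i, (v x i * S z x i + |p x * E x i - v x i|) := by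
          refine mul_le_mul_of_nonneg_left (Finset.sum_le_sum fun i _ => ?_)
            (div_nonneg (hN z x) (hp x))
          have h1 : (p x * E x i - v x i) * S z x i ≤ |p x * E x i - v x i| := by
            calc (p x * E x i - v x i) * S z x i ≤ |p x * E x i - v x i| * S z x i :=
                  mul_le_mul_of_nonneg_right (le_abs_self _) (hS0 z x i)
              _ ≤ |p x * E x i - v x i| * 1 :=
                  mul_le_mul_of_nonneg_left (hS1 z x i) (abs_nonneg _)
              _ = _ := mul_one _
          linarith
      _ ≤ _ := by
          rw [Finset.sum_add_distrib, mul_add]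
          have := mul_le_mul_of_nonneg_left (hE x) (div_nonneg (hN z x) (hp x))
          linarith
  calc _ ≤ ∑ z, ∑ x, (N z x / p x * ∑ i, v x i * S z x i
        + N z x / p x * |p x - ∑ i, v x i|) :=
        Finset.sum_le_sum fun z _ => Finset.sum_le_sum fun x _ => hpt z x
    _ = ∑ z, ∑ x, N z x / p x * ∑ i, v x i * S z x i
        + ∑ x, (∑ z, N z x) / p x * |p x - ∑ i, v x i| := by
        simp_rw [Finset.sum_add_distrib]
        congr 1
        rw [Finset.sum_comm]
        simp_rw [Finset.sum_div, Finset.sum_mul]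
    _ ≤ _ := by
        gcongr with x
        rw [hNp x]
        exact mul_le_of_le_one_left (abs_nonneg _) (div_self_le_one _)

end Covering
open Classical in
/-- One-shot coding with side information at the decoder: a random codebook indexed by
`μ × l` is used with the likelihood encoder, only the bin index in `μ` is transmitted, and the
decoder, knowing `κ z`, returns a codeword of the bin that passes the test `pass (κ z)`. -/
lemma exists_binning_code {A B K Z μ l : Type*} [Fintype A] [Fintype B] [Fintype Z]
    [Fintype μ] [Fintype l] [Nonempty μ] [Nonempty l]
    {p : A → ℝ} (hp1 : ∑ x, p x = 1)
    {W : B → A → ℝ} (hW0 : ∀ u x, 0 ≤ W u x) (hW1 : ∀ x, ∑ u, W u x = 1)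
    {q : B → ℝ} (hq : ∀ u, ∑ x, p x * W u x = q u)
    {N : Z → A → ℝ} (hN : ∀ z x, 0 ≤ N z x) (hNp : ∀ x, ∑ z, N z x = p x)
    (κ : Z → K) (pass : K → B → Prop) {h : Z → A → B → ℝ}
    (h0 : ∀ z x u, 0 ≤ h z x u) (h1 : ∀ z x u, h z x u ≤ 1) {T : ℝ} (hT : 0 ≤ T) :
    ∃ (E : A → μ → ℝ) (dec : K → μ → B), (∀ x m, 0 ≤ E x m) ∧ (∀ x, ∑ m, E x m = 1) ∧
      ∑ z, ∑ x, N z x * ∑ m, E x m * h z x (dec (κ z) m)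
        ≤ ∑ z, ∑ x, ∑ u, N z x * W u x * h z x u
          + ∑ z, ∑ x, ∑ u, N z x * W u x * (if pass (κ z) u then 0 else 1)
          + (Fintype.card l - 1) * ∑ z, ∑ x, N z x * ∑ u, q u * (if pass (κ z) u then 1 else 0)
          + (2 * (∑ x, ∑ u, p x * W u x * if T * (p x * q u) < p x * W u x then 1 else 0)
            + √(T / (Fintype.card μ * Fintype.card l))) := by
  have hp : ∀ x, 0 ≤ p x := fun x => hNp x ▸ Finset.sum_nonneg fun z _ => hN z x
  have hNle : ∀ z x, N z x ≤ p x := fun z x => hNp x ▸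
    Finset.single_le_sum (f := fun z => N z x) (fun z _ => hN z x) (Finset.mem_univ z)
  have hJ : ∀ x u, 0 ≤ p x * W u x := fun x u => mul_nonneg (hp x) (hW0 u x)
  have hJp : ∀ x, ∑ u, p x * W u x = p x := fun x => by rw [← Finset.mul_sum, hW1, mul_one]
  have hq0 : ∀ u, 0 ≤ q u := fun u => hq u ▸ Finset.sum_nonneg fun x _ => hJ x u
  have hJq : ∀ x u, p x * W u x ≤ q u := fun x u => hq u ▸
    Finset.single_le_sum (f := fun x => p x * W u x) (fun x _ => hJ x u) (Finset.mem_univ x)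
  have hq1 : ∑ u, q u = 1 := by
    simp_rw [← hq]; rw [Finset.sum_comm]; simp_rw [hJp, hp1]
  have hcancel : ∀ x u, q u * (p x * W u x / q u) = p x * W u x := by
    intro x u
    rcases (hq0 u).eq_or_lt with hu | hu
    · have : p x * W u x = 0 := le_antisymm (by rw [hu]; exact hJq x u) (hJ x u)
      simp [this]
    · field_simp
  have hNcancel : ∀ z x, N z x / p x * p x = N z x := by
    intro z x
    rcases (hp x).eq_or_lt with hx | hx
    · have : N z x = 0 := le_antisymm (by rw [hx]; exact hNle z x) (hN z x)
      simp [this]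
    · field_simp
  obtain ⟨M, hM⟩ : ∃ M : ℝ, M = (Fintype.card (μ × l) : ℝ) := ⟨_, rfl⟩
  have hM0 : 0 < M := by rw [hM]; exact_mod_cast Fintype.card_pos
  have hcover := soft_covering (ι := μ × l) hJ hJp hq hp1 hT
  rw [← hM] at hcover
  set δ : ℝ := 2 * (∑ x, ∑ u, p x * W u x * if T * (p x * q u) < p x * W u x then 1 else 0)
    + √(T / M) with hδ
  set v : (μ × l → B) → A → μ × l → ℝ :=
    fun c x j => M⁻¹ * (p x * W (c j) x / q (c j)) with hvdef
  have hv : ∀ c x j, 0 ≤ v c x j := fun c x j =>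
    mul_nonneg (by positivity) (div_nonneg (hJ _ _) (hq0 _))
  choose E hE0 hE1 hE using fun c => exists_likelihood_encoder p (hv c)
  have hdec : ∀ (c : μ × l → B) (k : K) (m : μ), ∃ i : l,
      (∃ i', pass k (c (m, i'))) → pass k (c (m, i)) := by
    intro c k m
    by_cases hex : ∃ i', pass k (c (m, i'))
    · exact ⟨hex.choose, fun _ => hex.choose_spec⟩
    · exact ⟨Classical.arbitrary l, fun hh => absurd hh hex⟩
  choose dec hdec using hdec
  set np : Z → B → ℝ := fun z u => if pass (κ z) u then 0 else 1 with hnp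
  set ps : Z → B → ℝ := fun z u => if pass (κ z) u then 1 else 0 with hps
  have hnp0 : ∀ z u, 0 ≤ np z u := fun z u => by simp only [hnp]; split_ifs <;> norm_num
  have hps0 : ∀ z u, 0 ≤ ps z u := fun z u => by simp only [hps]; split_ifs <;> norm_num
  set S : (μ × l → B) → Z → A → μ × l → ℝ :=
    fun c z x j => h z x (c (j.1, dec c (κ z) j.1)) with hS
  have hSle : ∀ c z x (j : μ × l), S c z x j
      ≤ (h z x (c j) + np z (c j)) + ∑ i ∈ Finset.univ.erase j.2, ps z (c (j.1, i)) := by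
    rintro c z x ⟨m, i⟩
    have hsum0 : 0 ≤ ∑ i' ∈ Finset.univ.erase i, ps z (c (m, i')) :=
      Finset.sum_nonneg fun i' _ => hps0 z _
    simp only [hS]
    by_cases hpi : pass (κ z) (c (m, i))
    · by_cases hd : dec c (κ z) m = i
      · rw [hd]
        linarith [hnp0 z (c (m, i))]
      · have hpd := hdec c (κ z) m ⟨i, hpi⟩
        have : (1 : ℝ) ≤ ∑ i' ∈ Finset.univ.erase i, ps z (c (m, i')) := by
          have hle := Finset.single_le_sum (f := fun i' => ps z (c (m, i')))
            (fun i' _ => hps0 z _) (Finset.mem_erase.2 ⟨hd, Finset.mem_univ _⟩)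
          have h1' : ps z (c (m, dec c (κ z) m)) = 1 := by simp [hps, hpd]
          simp only [h1'] at hle
          exact hle
        linarith [hnp0 z (c (m, i)), h0 z x (c (m, i)), h1 z x (c (m, dec c (κ z) m))]
    · have : np z (c (m, i)) = 1 := by simp [hnp, hpi]
      linarith [h0 z x (c (m, i)), h1 z x (c (m, dec c (κ z) m))]
  set w : (μ × l → B) → ℝ := fun c => ∏ j, q (c j) with hw
  have hw0 : ∀ c, 0 ≤ w c := fun c => Finset.prod_nonneg fun j _ => hq0 _
  have hw1 : ∑ c, w c = 1 := sum_iid hq1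
  have hexp : ∀ z x j, ∑ c, w c * (v c x j * S c z x j)
      ≤ M⁻¹ * (∑ u, p x * W u x * (h z x u + np z u)
        + (Fintype.card l - 1) * (p x * ∑ u, q u * ps z u)) := by
    intro z x j
    have e1 : ∑ c, w c * (v c x j * (h z x (c j) + np z (c j)))
        = M⁻¹ * ∑ u, p x * W u x * (h z x u + np z u) := by
      rw [show ∑ c, w c * (v c x j * (h z x (c j) + np z (c j))) = _ from
        sum_iid_mul hq1 j (fun u => M⁻¹ * (p x * W u x / q u) * (h z x u + np z u)),
        Finset.mul_sum]
      refine Finset.sum_congr rfl fun u _ => ?_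
      calc _ = M⁻¹ * ((q u * (p x * W u x / q u)) * (h z x u + np z u)) := by ring
        _ = _ := by rw [hcancel]
    have e2 : ∀ i ∈ Finset.univ.erase j.2, ∑ c, w c * (v c x j * ps z (c (j.1, i)))
        = M⁻¹ * (p x * ∑ u, q u * ps z u) := by
      intro i hi
      have hne : j ≠ (j.1, i) := fun hj => (Finset.mem_erase.1 hi).1 (by rw [hj])
      rw [show ∑ c, w c * (v c x j * ps z (c (j.1, i))) = _ from
        sum_iid_mul_mul hq1 hne (fun u => M⁻¹ * (p x * W u x / q u)) (ps z), ← mul_assoc]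
      congr 1
      calc _ = ∑ u, M⁻¹ * (q u * (p x * W u x / q u)) :=
            Finset.sum_congr rfl fun u _ => by ring
        _ = _ := by simp_rw [hcancel]; rw [← Finset.mul_sum, hJp]
    calc ∑ c, w c * (v c x j * S c z x j)
        ≤ ∑ c, (w c * (v c x j * (h z x (c j) + np z (c j)))
          + ∑ i ∈ Finset.univ.erase j.2, w c * (v c x j * ps z (c (j.1, i)))) := by
          refine Finset.sum_le_sum fun c _ => ?_
          rw [← Finset.mul_sum, ← Finset.mul_sum, ← mul_add, ← mul_add]
          exact mul_le_mul_of_nonneg_left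
            (mul_le_mul_of_nonneg_left (hSle c z x j) (hv c x j)) (hw0 c)
      _ = _ := by
          rw [Finset.sum_add_distrib, e1, Finset.sum_comm, Finset.sum_congr rfl e2,
            Finset.sum_const, Finset.card_erase_of_mem (Finset.mem_univ _), Finset.card_univ,
            nsmul_eq_mul, Nat.cast_sub Fintype.card_pos]
          push_cast
          ring
  have havg : ∑ c, w c * ∑ z, ∑ x, N z x * ∑ j, E c x j * S c z x j
      ≤ ∑ z, ∑ x, ∑ u, N z x * W u x * h z x u
          + ∑ z, ∑ x, ∑ u, N z x * W u x * np z u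
          + (Fintype.card l - 1) * ∑ z, ∑ x, N z x * ∑ u, q u * ps z u + δ := by
    calc ∑ c, w c * ∑ z, ∑ x, N z x * ∑ j, E c x j * S c z x j
        ≤ ∑ c, w c * (∑ z, ∑ x, N z x / p x * ∑ j, v c x j * S c z x j
            + ∑ x, |p x - ∑ j, v c x j|) :=
          Finset.sum_le_sum fun c _ => mul_le_mul_of_nonneg_left
            (encoder_replacement (hE c) hN hNp (fun z x j => h0 _ _ _)
              (fun z x j => h1 _ _ _)) (hw0 c)
      _ = ∑ z, ∑ x, N z x / p x * ∑ j, ∑ c, w c * (v c x j * S c z x j)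
            + ∑ c, w c * ∑ x, |p x - ∑ j, v c x j| := by
          simp_rw [mul_add]
          rw [Finset.sum_add_distrib]
          congr 1
          simp_rw [Finset.mul_sum]
          rw [Finset.sum_comm]
          refine Finset.sum_congr rfl fun z _ => ?_
          rw [Finset.sum_comm]
          refine Finset.sum_congr rfl fun x _ => ?_
          rw [Finset.sum_comm]
          refine Finset.sum_congr rfl fun j _ => Finset.sum_congr rfl fun c _ => ?_
          ring
      _ ≤ ∑ z, ∑ x, N z x / p x * ∑ _j : μ × l,
              M⁻¹ * (∑ u, p x * W u x * (h z x u + np z u)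
                + (Fintype.card l - 1) * (p x * ∑ u, q u * ps z u)) + δ := by
          refine add_le_add (Finset.sum_le_sum fun z _ => Finset.sum_le_sum fun x _ =>
            mul_le_mul_of_nonneg_left (Finset.sum_le_sum fun j _ => hexp z x j)
              (div_nonneg (hN z x) (hp x))) hcover
      _ = ∑ z, ∑ x, (∑ u, N z x * W u x * h z x u + ∑ u, N z x * W u x * np z u
            + (Fintype.card l - 1) * (N z x * ∑ u, q u * ps z u)) + δ := by
          congr 1
          refine Finset.sum_congr rfl fun z _ => Finset.sum_congr rfl fun x _ => ?_
          rw [Finset.sum_const, Finset.card_univ, nsmul_eq_mul, ← hM, ← mul_assoc M,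
            mul_inv_cancel₀ hM0.ne', one_mul]
          have e : ∑ u, p x * W u x * (h z x u + np z u)
              = p x * ∑ u, W u x * (h z x u + np z u) := by
            rw [Finset.mul_sum]; simp_rw [mul_assoc]
          rw [e]
          calc _ = (N z x / p x * p x) * (∑ u, W u x * (h z x u + np z u)
                + (Fintype.card l - 1) * ∑ u, q u * ps z u) := by ring
            _ = _ := by
              rw [hNcancel, mul_add]
              congr 1
              · simp_rw [mul_add, Finset.sum_add_distrib, mul_add, Finset.mul_sum, mul_assoc]
              · ring
      _ = _ := by
          simp_rw [Finset.sum_add_distrib, Finset.mul_sum]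
  obtain ⟨c, hc⟩ := exists_le_of_weighted_sum_le hw0 hw1 havg
  refine ⟨fun x m => ∑ i, E c x (m, i), fun k m => c (m, dec c k m),
    fun x m => Finset.sum_nonneg fun i _ => hE0 c x _, fun x => ?_, ?_⟩
  · rw [← hE1 c x, Fintype.sum_prod_type]
  · have hMeq : M = (Fintype.card μ * Fintype.card l : ℝ) := by
      rw [hM, Fintype.card_prod]; push_cast; rfl
    rw [← hMeq]
    convert hc using 6 with z _ x _
    rw [Fintype.sum_prod_type]
    simp_rw [hS, Finset.sum_mul]

open Classical in
/-- One-shot version of the corner point: the first source is described without side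
information, the second one with binning, the first codeword being the side information. -/
lemma exists_one_shot_code {A1 A2 B1 B2 μ1 μ2 l : Type*} [Fintype A1] [Fintype A2] [Fintype B1]
    [Fintype B2] [Fintype μ1] [Fintype μ2] [Fintype l] [Nonempty μ1] [Nonempty μ2] [Nonempty l]
    {P : A1 → A2 → ℝ} (hP : ∀ x1 x2, 0 ≤ P x1 x2)
    {p1 : A1 → ℝ} (hp1 : ∀ x1, ∑ x2, P x1 x2 = p1 x1) (hp1_sum : ∑ x1, p1 x1 = 1)
    {p2 : A2 → ℝ} (hp2 : ∀ x2, ∑ x1, P x1 x2 = p2 x2)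
    {W1 : B1 → A1 → ℝ} (hW10 : ∀ u x, 0 ≤ W1 u x) (hW11 : ∀ x, ∑ u, W1 u x = 1)
    {W2 : B2 → A2 → ℝ} (hW20 : ∀ u x, 0 ≤ W2 u x) (hW21 : ∀ x, ∑ u, W2 u x = 1)
    {q1 : B1 → ℝ} (hq1 : ∀ u, ∑ x, p1 x * W1 u x = q1 u)
    {q2 : B2 → ℝ} (hq2 : ∀ u, ∑ x, p2 x * W2 u x = q2 u)
    {q12 : B1 → B2 → ℝ}
    (hq12 : ∀ u1 u2, ∑ x1, ∑ x2, P x1 x2 * W1 u1 x1 * W2 u2 x2 = q12 u1 u2)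
    {g : B1 → A1 → A2 → B2 → ℝ} (hg0 : ∀ u1 x1 x2 u2, 0 ≤ g u1 x1 x2 u2)
    (hg1 : ∀ u1 x1 x2 u2, g u1 x1 x2 u2 ≤ 1)
    {T1 T2 T3 : ℝ} (hT1 : 0 ≤ T1) (hT2 : 0 ≤ T2) (hT3 : 0 < T3) :
    ∃ (E1 : A1 → μ1 → ℝ) (E2 : A2 → μ2 → ℝ) (dec1 : μ1 → B1) (dec2 : B1 → μ2 → B2),
      (∀ x m, 0 ≤ E1 x m) ∧ (∀ x, ∑ m, E1 x m = 1) ∧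
      (∀ x m, 0 ≤ E2 x m) ∧ (∀ x, ∑ m, E2 x m = 1) ∧
      ∑ x1, ∑ x2, P x1 x2 * ∑ m1, ∑ m2, E1 x1 m1 * E2 x2 m2 *
          g (dec1 m1) x1 x2 (dec2 (dec1 m1) m2)
        ≤ ∑ u1, ∑ x1, ∑ x2, ∑ u2, P x1 x2 * W1 u1 x1 * W2 u2 x2 * g u1 x1 x2 u2
          + ∑ u1, ∑ u2, q12 u1 u2 * (if T3 * (q1 u1 * q2 u2) < q12 u1 u2 then 0 else 1)
          + (Fintype.card l - 1) * T3⁻¹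
          + (2 * (∑ x, ∑ u, p1 x * W1 u x * if T1 * (p1 x * q1 u) < p1 x * W1 u x then 1 else 0)
            + √(T1 / Fintype.card μ1))
          + (2 * (∑ x, ∑ u, p2 x * W2 u x * if T2 * (p2 x * q2 u) < p2 x * W2 u x then 1 else 0)
            + √(T2 / (Fintype.card μ2 * Fintype.card l))) := by
  have hp2_sum : ∑ x2, p2 x2 = 1 := by
    simp_rw [← hp2]; rw [Finset.sum_comm]; simp_rw [hp1, hp1_sum]
  have hq12_sum : ∑ u1, ∑ u2, q12 u1 u2 = 1 := by
    calc ∑ u1, ∑ u2, q12 u1 u2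
        = ∑ u1, ∑ x1, ∑ x2, P x1 x2 * W1 u1 x1 := by
          refine Finset.sum_congr rfl fun u1 _ => ?_
          simp_rw [← hq12]
          rw [Finset.sum_comm]
          refine Finset.sum_congr rfl fun x1 _ => ?_
          rw [Finset.sum_comm]
          refine Finset.sum_congr rfl fun x2 _ => ?_
          rw [← Finset.mul_sum, hW21, mul_one]
      _ = 1 := by
          rw [Finset.sum_comm, ← hp1_sum]
          refine Finset.sum_congr rfl fun x1 _ => ?_
          simp_rw [← Finset.sum_mul, hp1]
          rw [← Finset.mul_sum, hW11, mul_one]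
  have hl : (0 : ℝ) ≤ Fintype.card l - 1 := by
    have : (1 : ℝ) ≤ Fintype.card l := by exact_mod_cast Fintype.card_pos (α := l)
    linarith
  obtain ⟨E2, dec2, hE20, hE21, hbound2⟩ := exists_binning_code (Z := B1 × A1) (μ := μ2) (l := l)
    hp2_sum hW20 hW21 hq2
    (N := fun z x2 => P z.2 x2 * W1 z.1 z.2)
    (fun z x2 => mul_nonneg (hP _ _) (hW10 _ _))
    (fun x2 => by
      rw [Fintype.sum_prod_type, Finset.sum_comm, ← hp2 x2]
      refine Finset.sum_congr rfl fun x1 _ => ?_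
      simp only
      rw [← Finset.mul_sum, hW11, mul_one])
    Prod.fst (fun u1 u2 => T3 * (q1 u1 * q2 u2) < q12 u1 u2)
    (h := fun z x2 u2 => g z.1 z.2 x2 u2)
    (fun z x2 u2 => hg0 _ _ _ _) (fun z x2 u2 => hg1 _ _ _ _) hT2
  obtain ⟨E1, dec1, hE10, hE11, hbound1⟩ := exists_binning_code (Z := A2) (μ := μ1) (l := Unit)
    hp1_sum hW10 hW11 hq1 (N := fun x2 x1 => P x1 x2) (fun x2 x1 => hP x1 x2) hp1
    (fun _ => ()) (fun _ _ => True)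
    (h := fun x2 x1 u1 => ∑ m, E2 x2 m * g u1 x1 x2 (dec2 u1 m))
    (fun x2 x1 u1 => Finset.sum_nonneg fun m _ => mul_nonneg (hE20 _ _) (hg0 _ _ _ _))
    (fun x2 x1 u1 => by
      rw [← hE21 x2]
      exact Finset.sum_le_sum fun m _ => mul_le_of_le_one_right (hE20 _ _) (hg1 _ _ _ _)) hT1
  refine ⟨E1, E2, dec1 (), dec2, hE10, hE11, hE20, hE21, ?_⟩
  simp only [if_true, mul_zero, Finset.sum_const_zero, add_zero, Fintype.card_unit, Nat.cast_one,
    sub_self, zero_mul, mul_one] at hbound1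
  rw [Finset.sum_comm]
  simp_rw [mul_assoc (E1 _ _), ← Finset.mul_sum]
  refine hbound1.trans ?_
  rw [add_right_comm _ (2 * _ + √(T1 / _)) _]
  refine add_le_add ?_ le_rfl
  have hlhs : ∑ x2, ∑ x1, ∑ u1, P x1 x2 * W1 u1 x1 * ∑ m, E2 x2 m * g u1 x1 x2 (dec2 u1 m)
      = ∑ z : B1 × A1, ∑ x, P z.2 x * W1 z.1 z.2 *
          ∑ m, E2 x m * g z.1 z.2 x (dec2 z.1 m) := by
    rw [Fintype.sum_prod_type]
    simp only
    rw [Finset.sum_comm]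
    rw [Finset.sum_comm (s := (Finset.univ : Finset B1))]
    refine Finset.sum_congr rfl fun x1 _ => ?_
    rw [Finset.sum_comm]
  rw [hlhs]
  refine hbound2.trans ?_
  refine add_le_add (add_le_add (add_le_add ?_ ?_) ?_) le_rfl
  · rw [Fintype.sum_prod_type]
  · rw [Fintype.sum_prod_type]
    refine Finset.sum_le_sum fun u1 _ => le_of_eq ?_
    simp only
    simp_rw [← hq12 u1, Finset.sum_mul]
    rw [Finset.sum_comm (s := (Finset.univ : Finset B2))]
    refine Finset.sum_congr rfl fun x1 _ => ?_
    rw [Finset.sum_comm]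
  · refine mul_le_mul_of_nonneg_left ?_ hl
    calc _ = ∑ u1, q1 u1 * ∑ u2, q2 u2 * (if T3 * (q1 u1 * q2 u2) < q12 u1 u2 then 1 else 0) := by
          rw [Fintype.sum_prod_type]
          refine Finset.sum_congr rfl fun u1 _ => ?_
          simp only
          simp_rw [← Finset.sum_mul, hp1]
          have e := congrArg (· * ∑ u2, q2 u2 *
            (if T3 * (q1 u1 * q2 u2) < q12 u1 u2 then (1 : ℝ) else 0)) (hq1 u1)
          simp only [Finset.sum_mul _ _ (∑ u2, q2 u2 * _)] at e
          exact e
      _ ≤ ∑ u1, ∑ u2, T3⁻¹ * q12 u1 u2 := by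
          refine Finset.sum_le_sum fun u1 _ => ?_
          rw [Finset.mul_sum]
          refine Finset.sum_le_sum fun u2 _ => ?_
          have hq12_nonneg : 0 ≤ q12 u1 u2 := hq12 u1 u2 ▸ Finset.sum_nonneg fun x1 _ =>
            Finset.sum_nonneg fun x2 _ => mul_nonneg (mul_nonneg (hP _ _) (hW10 _ _)) (hW20 _ _)
          split_ifs with hlt
          · rw [mul_one, le_inv_mul_iff₀ hT3]
            exact hlt.le
          · simp only [mul_zero]; positivity
      _ = T3⁻¹ := by
          simp_rw [← Finset.mul_sum, hq12_sum, mul_one]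

section Concentration

lemma sum_pi_prodMk {ι A B : Type*} [Fintype ι] [DecidableEq ι] [Fintype A] [Fintype B]
    (F : (ι → A) → (ι → B) → ℝ) :
    ∑ x, ∑ u, F x u = ∑ c : ι → A × B, F (fun t => (c t).1) (fun t => (c t).2) := by
  rw [← Fintype.sum_prod_type' F,
    ← (Equiv.arrowProdEquivProdArrow ι (fun _ => A) (fun _ => B)).sum_comp]
  rfl

/-- Chebyshev's inequality for i.i.d. sequences. -/
lemma iid_chebyshev {A : Type*} [Fintype A] {q : A → ℝ} (hq0 : ∀ a, 0 ≤ q a)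
    (hq1 : ∑ a, q a = 1) (f : A → ℝ) {m : ℝ} (hm : ∑ a, q a * f a = m) {n : ℕ} (hn : 1 ≤ n)
    {ε : ℝ} (hε : 0 < ε) {g : (Fin n → A) → ℝ} (hg1 : ∀ c, g c ≤ 1)
    (hg : ∀ c, (∀ t, 0 < q (c t)) → |∑ t, f (c t) - n * m| < n * ε → g c ≤ 0) :
    ∑ c : Fin n → A, (∏ t, q (c t)) * g c ≤ (∑ a, q a * (f a - m) ^ 2) / (n * ε ^ 2) := by
  have hn0 : (0 : ℝ) < n := by exact_mod_cast hn
  have hmean : ∑ a, q a * (f a - m) = 0 := by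
    simp_rw [mul_sub]
    rw [Finset.sum_sub_distrib, hm, ← Finset.sum_mul, hq1]; ring
  have hpt : ∀ c : Fin n → A, (∏ t, q (c t)) * g c
      ≤ (∏ t, q (c t)) * (∑ t, (f (c t) - m)) ^ 2 * ((n * ε) ^ 2)⁻¹ := by
    intro c
    by_cases hpos : ∀ t, 0 < q (c t)
    · rw [mul_assoc]
      refine mul_le_mul_of_nonneg_left ?_ (Finset.prod_nonneg fun t _ => hq0 _)
      have hsum : ∑ t, (f (c t) - m) = ∑ t, f (c t) - n * m := by
        simp [Finset.sum_sub_distrib]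
      rw [hsum]
      by_cases hlt : |∑ t, f (c t) - n * m| < n * ε
      · exact (hg c hpos hlt).trans (by positivity)
      · refine (hg1 c).trans ?_
        rw [← div_eq_mul_inv, one_le_div (by positivity), ← sq_abs (∑ t, f (c t) - n * m)]
        exact pow_le_pow_left₀ (by positivity) (not_lt.1 hlt) 2
    · push Not at hpos
      obtain ⟨t, ht⟩ := hpos
      have : ∏ t, q (c t) = 0 :=
        Finset.prod_eq_zero (Finset.mem_univ t) (le_antisymm ht (hq0 _))
      simp [this]
  refine (Finset.sum_le_sum fun c _ => hpt c).trans (le_of_eq ?_)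
  rw [← Finset.sum_mul, sum_iid_mul_sq hq1 hmean, Fintype.card_fin]
  field_simp

/-- The information density of a block of i.i.d. pairs concentrates around the mutual
information. -/
lemma information_density_deviation {A B : Type*} [Fintype A] [Fintype B] {J : A → B → ℝ}
    (hJ : ∀ x u, 0 ≤ J x u) {p : A → ℝ} {q : B → ℝ} (hp : ∀ x, ∑ u, J x u = p x)
    (hq : ∀ u, ∑ x, J x u = q u) (hp1 : ∑ x, p x = 1) :
    ∃ V : ℝ, ∀ (n : ℕ) (ε : ℝ), 1 ≤ n → 0 < ε → ∀ g : (Fin n → A) → (Fin n → B) → ℝ,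
      (∀ x u, g x u ≤ 1) →
      (∀ x u, (2 : ℝ) ^ (n * (mutInf J - ε)) * ((∏ t, p (x t)) * ∏ t, q (u t))
          < ∏ t, J (x t) (u t) →
        ∏ t, J (x t) (u t)
          ≤ (2 : ℝ) ^ (n * (mutInf J + ε)) * ((∏ t, p (x t)) * ∏ t, q (u t)) → g x u ≤ 0) →
      ∑ x, ∑ u, (∏ t, J (x t) (u t)) * g x u ≤ V / (n * ε ^ 2) := by
  refine ⟨∑ a : A × B, J a.1 a.2 *
    (Real.logb 2 (J a.1 a.2 / (p a.1 * q a.2)) - mutInf J) ^ 2, ?_⟩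
  intro n ε hn hε g hg1 hg
  rw [sum_pi_prodMk (fun x u => (∏ t, J (x t) (u t)) * g x u)]
  refine iid_chebyshev (q := fun a : A × B => J a.1 a.2) (fun a => hJ _ _) ?_
    (fun a => Real.logb 2 (J a.1 a.2 / (p a.1 * q a.2))) ?_ hn hε
    (g := fun c => g (fun t => (c t).1) (fun t => (c t).2)) (fun c => hg1 _ _) ?_
  · rw [Fintype.sum_prod_type]; simp_rw [hp, hp1]
  · rw [Fintype.sum_prod_type, mutInf]
    simp_rw [hp, hq]
  · intro c hc hdev
    have hpp : ∀ t, 0 < p (c t).1 := fun t => (hc t).trans_le <| hp (c t).1 ▸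
      Finset.single_le_sum (f := fun u => J (c t).1 u) (fun u _ => hJ _ u) (Finset.mem_univ _)
    have hqp : ∀ t, 0 < q (c t).2 := fun t => (hc t).trans_le <| hq (c t).2 ▸
      Finset.single_le_sum (f := fun x => J x (c t).2) (fun x _ => hJ x _) (Finset.mem_univ _)
    have hrpos : ∀ t, 0 < J (c t).1 (c t).2 / (p (c t).1 * q (c t).2) := fun t =>
      div_pos (hc t) (mul_pos (hpp t) (hqp t))
    have hpq : 0 < (∏ t, p (c t).1) * ∏ t, q (c t).2 :=
      mul_pos (Finset.prod_pos fun t _ => hpp t) (Finset.prod_pos fun t _ => hqp t)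
    have hprod : ∏ t, J (c t).1 (c t).2
        = (2 : ℝ) ^ (∑ t, Real.logb 2 (J (c t).1 (c t).2 / (p (c t).1 * q (c t).2)))
          * ((∏ t, p (c t).1) * ∏ t, q (c t).2) := by
      rw [Real.rpow_sum_of_pos (by norm_num), ← Finset.prod_mul_distrib,
        ← Finset.prod_mul_distrib]
      refine Finset.prod_congr rfl fun t _ => ?_
      rw [Real.rpow_logb (by norm_num) (by norm_num) (hrpos t)]
      rw [div_mul_cancel₀ _ (mul_pos (hpp t) (hqp t)).ne']
    rw [abs_lt] at hdev
    apply hg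
    · rw [hprod]
      refine mul_lt_mul_of_pos_right ?_ hpq
      exact Real.rpow_lt_rpow_of_exponent_lt (by norm_num) (by linarith)
    · rw [hprod]
      refine mul_le_mul_of_nonneg_right ?_ hpq.le
      exact Real.rpow_le_rpow_of_exponent_le (by norm_num) (by linarith)

end Concentration

lemma iid_sum_gt_le {A : Type*} [Fintype A] {q : A → ℝ} (hq0 : ∀ a, 0 ≤ q a)
    (hq1 : ∑ a, q a = 1) (f : A → ℝ) {D : ℝ} (hD : ∑ a, q a * f a ≤ D) :
    ∃ V : ℝ, ∀ (n : ℕ) (η : ℝ), 1 ≤ n → 0 < η →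
      ∑ c : Fin n → A, (∏ t, q (c t)) * (if n * (D + η) < ∑ t, f (c t) then 1 else 0)
        ≤ V / (n * η ^ 2) := by
  refine ⟨∑ a, q a * (f a - ∑ a, q a * f a) ^ 2, fun n η hn hη => ?_⟩
  refine iid_chebyshev hq0 hq1 f rfl hn hη (fun c => by split_ifs <;> norm_num) ?_
  intro c _ hdev
  rw [if_neg]
  rw [abs_lt] at hdev
  have : (n : ℝ) * ∑ a, q a * f a ≤ n * D := by gcongr
  linarith [hdev.2, mul_add (n : ℝ) D η]

lemma two_rpow_div_ceil_le {a b r : ℝ} (h : a - b ≤ r) :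
    (2 : ℝ) ^ a / ⌈(2 : ℝ) ^ b⌉₊ ≤ (2 : ℝ) ^ r := by
  calc (2 : ℝ) ^ a / ⌈(2 : ℝ) ^ b⌉₊ ≤ (2 : ℝ) ^ a / (2 : ℝ) ^ b :=
        div_le_div_of_nonneg_left (by positivity) (by positivity) (Nat.le_ceil _)
    _ = (2 : ℝ) ^ (a - b) := (Real.rpow_sub (by norm_num) _ _).symm
    _ ≤ _ := Real.rpow_le_rpow_of_exponent_le (by norm_num) h

lemma two_rpow_div_ceil_mul_ceil_le {a b c r : ℝ} (h : a - b - c ≤ r) :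
    (2 : ℝ) ^ a / (⌈(2 : ℝ) ^ b⌉₊ * ⌈(2 : ℝ) ^ c⌉₊) ≤ (2 : ℝ) ^ r := by
  calc (2 : ℝ) ^ a / (⌈(2 : ℝ) ^ b⌉₊ * ⌈(2 : ℝ) ^ c⌉₊)
      ≤ (2 : ℝ) ^ a / ((2 : ℝ) ^ b * (2 : ℝ) ^ c) :=
        div_le_div_of_nonneg_left (by positivity) (by positivity)
          (mul_le_mul (Nat.le_ceil _) (Nat.le_ceil _) (by positivity) (by positivity))
    _ = (2 : ℝ) ^ (a - b - c) := by
        rw [Real.rpow_sub (by norm_num), Real.rpow_sub (by norm_num), div_div]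
    _ ≤ _ := Real.rpow_le_rpow_of_exponent_le (by norm_num) h

/-- Block codes at the corner point: the probability that one of two additive costs exceeds
its mean by more than `η` per letter is small. -/
lemma exists_block_code {X1 X2 U1 U2 : Type*} [Fintype X1] [Fintype X2] [Fintype U1]
    [Fintype U2]
    {P : X1 → X2 → ℝ} (hP : ∀ x1 x2, 0 ≤ P x1 x2)
    {p1 : X1 → ℝ} (hp1 : ∀ x1, ∑ x2, P x1 x2 = p1 x1) (hp1_sum : ∑ x1, p1 x1 = 1)
    {p2 : X2 → ℝ} (hp2 : ∀ x2, ∑ x1, P x1 x2 = p2 x2)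
    {W1 : U1 → X1 → ℝ} (hW10 : ∀ u x, 0 ≤ W1 u x) (hW11 : ∀ x, ∑ u, W1 u x = 1)
    {W2 : U2 → X2 → ℝ} (hW20 : ∀ u x, 0 ≤ W2 u x) (hW21 : ∀ x, ∑ u, W2 u x = 1)
    {q1 : U1 → ℝ} (hq1 : ∀ u, ∑ x, p1 x * W1 u x = q1 u)
    {q2 : U2 → ℝ} (hq2 : ∀ u, ∑ x, p2 x * W2 u x = q2 u)
    {q12 : U1 → U2 → ℝ}
    (hq12 : ∀ u1 u2, ∑ x1, ∑ x2, P x1 x2 * W1 u1 x1 * W2 u2 x2 = q12 u1 u2)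
    (f1 f2 : U1 × X1 × X2 × U2 → ℝ) {D1 D2 : ℝ}
    (hD1 : ∑ a : U1 × X1 × X2 × U2, P a.2.1 a.2.2.1 * W1 a.1 a.2.1 * W2 a.2.2.2 a.2.2.1 * f1 a
      ≤ D1)
    (hD2 : ∑ a : U1 × X1 × X2 × U2, P a.2.1 a.2.2.1 * W1 a.1 a.2.1 * W2 a.2.2.2 a.2.2.1 * f2 a
      ≤ D2)
    {R1 R2 ε : ℝ} (hε : 0 < ε)
    (hR1 : mutInf (fun x u => p1 x * W1 u x) + 2 * ε ≤ R1)
    (hR2 : mutInf (fun x u => p2 x * W2 u x) - mutInf q12 + 4 * ε ≤ R2) :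
    ∃ V V' : ℝ, ∀ (n : ℕ) (η : ℝ), 1 ≤ n → 0 < η →
      ∃ (E1 : (Fin n → X1) → Fin ⌈(2 : ℝ) ^ (n * R1)⌉₊ → ℝ)
        (E2 : (Fin n → X2) → Fin ⌈(2 : ℝ) ^ (n * R2)⌉₊ → ℝ)
        (dec1 : Fin ⌈(2 : ℝ) ^ (n * R1)⌉₊ → Fin n → U1)
        (dec2 : (Fin n → U1) → Fin ⌈(2 : ℝ) ^ (n * R2)⌉₊ → Fin n → U2),
        (∀ x m, 0 ≤ E1 x m) ∧ (∀ x, ∑ m, E1 x m = 1) ∧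
        (∀ x m, 0 ≤ E2 x m) ∧ (∀ x, ∑ m, E2 x m = 1) ∧
        ∑ x1, ∑ x2, (∏ t, P (x1 t) (x2 t)) * ∑ m1, ∑ m2, E1 x1 m1 * E2 x2 m2 *
            (if n * (D1 + η) < ∑ t, f1 (dec1 m1 t, x1 t, x2 t, dec2 (dec1 m1) m2 t) ∨
              n * (D2 + η) < ∑ t, f2 (dec1 m1 t, x1 t, x2 t, dec2 (dec1 m1) m2 t)
              then 1 else 0)
          ≤ V / (n * η ^ 2) + V' / (n * ε ^ 2) + (2 : ℝ) ^ (-(n * ε))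
            + 2 * √((2 : ℝ) ^ (-(n * ε))) := by
  classical
  have hp2_sum : ∑ x2, p2 x2 = 1 := by
    simp_rw [← hp2]; rw [Finset.sum_comm]; simp_rw [hp1, hp1_sum]
  have hp2_nonneg : ∀ x, 0 ≤ p2 x := fun x => hp2 x ▸ Finset.sum_nonneg fun y _ => hP y x
  have hp1_nonneg : ∀ x, 0 ≤ p1 x := fun x => hp1 x ▸ Finset.sum_nonneg fun y _ => hP x y
  have hq12_nonneg : ∀ u1 u2, 0 ≤ q12 u1 u2 := fun u1 u2 => hq12 u1 u2 ▸
    Finset.sum_nonneg fun x1 _ => Finset.sum_nonneg fun x2 _ =>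
      mul_nonneg (mul_nonneg (hP _ _) (hW10 _ _)) (hW20 _ _)
  have hq12_left : ∀ u1, ∑ u2, q12 u1 u2 = q1 u1 := by
    intro u1
    simp_rw [← hq12, ← hq1, ← hp1]
    rw [Finset.sum_comm]
    refine Finset.sum_congr rfl fun x1 _ => ?_
    rw [Finset.sum_comm, Finset.sum_mul]
    refine Finset.sum_congr rfl fun x2 _ => ?_
    rw [← Finset.mul_sum, hW21, mul_one]
  have hq12_right : ∀ u2, ∑ u1, q12 u1 u2 = q2 u2 := by
    intro u2
    simp_rw [← hq12, ← hq2, ← hp2, Finset.sum_mul]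
    rw [Finset.sum_comm, Finset.sum_comm (s := (Finset.univ : Finset X2))]
    refine Finset.sum_congr rfl fun x1 _ => ?_
    rw [Finset.sum_comm]
    refine Finset.sum_congr rfl fun x2 _ => ?_
    rw [← Finset.sum_mul, ← Finset.mul_sum, hW11, mul_one]
  have hq1_sum : ∑ u, q1 u = 1 := by
    simp_rw [← hq1]; rw [Finset.sum_comm]
    simp_rw [← Finset.mul_sum, hW11, mul_one, hp1_sum]
  set Q : U1 × X1 × X2 × U2 → ℝ := fun a => P a.2.1 a.2.2.1 * W1 a.1 a.2.1 * W2 a.2.2.2 a.2.2.1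
    with hQ
  have hQ0 : ∀ a, 0 ≤ Q a := fun a => mul_nonneg (mul_nonneg (hP _ _) (hW10 _ _)) (hW20 _ _)
  have hQ1 : ∑ a, Q a = 1 := by
    simp only [hQ, Fintype.sum_prod_type]
    simp_rw [← Finset.mul_sum, hW21, mul_one]
    rw [Finset.sum_comm]
    simp_rw [← Finset.sum_mul, hp1, ← Finset.mul_sum, hW11, mul_one, hp1_sum]
  obtain ⟨Vd1, hVd1⟩ := iid_sum_gt_le hQ0 hQ1 f1 hD1
  obtain ⟨Vd2, hVd2⟩ := iid_sum_gt_le hQ0 hQ1 f2 hD2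
  obtain ⟨V1, hV1⟩ := information_density_deviation (J := fun x u => p1 x * W1 u x)
    (fun x u => mul_nonneg (hp1_nonneg x) (hW10 u x))
    (fun x => by rw [← Finset.mul_sum, hW11, mul_one]) hq1 hp1_sum
  obtain ⟨V2, hV2⟩ := information_density_deviation (J := fun x u => p2 x * W2 u x)
    (fun x u => mul_nonneg (hp2_nonneg x) (hW20 u x))
    (fun x => by rw [← Finset.mul_sum, hW21, mul_one]) hq2 hp2_sum
  obtain ⟨V3, hV3⟩ := information_density_deviation hq12_nonneg hq12_left hq12_right hq1_sum
  generalize mutInf (fun x u => p1 x * W1 u x) = I1 at *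
  generalize mutInf (fun x u => p2 x * W2 u x) = I2 at *
  generalize mutInf q12 = I12 at *
  refine ⟨Vd1 + Vd2, V3 + 2 * V1 + 2 * V2, fun n η hn hη => ?_⟩
  have hn0 : (0 : ℝ) < n := by exact_mod_cast hn
  have hne : ∀ a : ℝ, Nonempty (Fin ⌈(2 : ℝ) ^ a⌉₊) := fun a =>
    Fin.pos_iff_nonempty.1 (Nat.ceil_pos.2 (by positivity))
  have := hne (n * R1)
  have := hne (n * R2)
  have := hne (n * (I12 - 2 * ε))
  obtain ⟨E1, E2, dec1, dec2, hE10, hE11, hE20, hE21, hbound⟩ := exists_one_shot_code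
    (μ1 := Fin ⌈(2 : ℝ) ^ (n * R1)⌉₊) (μ2 := Fin ⌈(2 : ℝ) ^ (n * R2)⌉₊)
    (l := Fin ⌈(2 : ℝ) ^ (n * (I12 - 2 * ε))⌉₊)
    (P := fun (x1 : Fin n → X1) (x2 : Fin n → X2) => ∏ t, P (x1 t) (x2 t))
    (fun x1 x2 => Finset.prod_nonneg fun t _ => hP _ _)
    (p1 := fun x1 => ∏ t, p1 (x1 t))
    (fun x1 => by simp_rw [← hp1]; exact sum_pi_prod fun t a => P (x1 t) a)
    (sum_iid hp1_sum)
    (p2 := fun x2 => ∏ t, p2 (x2 t))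
    (fun x2 => by simp_rw [← hp2]; exact sum_pi_prod fun t a => P a (x2 t))
    (W1 := fun (u : Fin n → U1) x => ∏ t, W1 (u t) (x t))
    (fun u x => Finset.prod_nonneg fun t _ => hW10 _ _)
    (fun x => by rw [sum_pi_prod fun t a => W1 a (x t)]; simp [hW11])
    (W2 := fun (u : Fin n → U2) x => ∏ t, W2 (u t) (x t))
    (fun u x => Finset.prod_nonneg fun t _ => hW20 _ _)
    (fun x => by rw [sum_pi_prod fun t a => W2 a (x t)]; simp [hW21])
    (q1 := fun u => ∏ t, q1 (u t))
    (fun u => by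
      simp_rw [← hq1, ← Finset.prod_mul_distrib]
      exact sum_pi_prod fun t a => p1 a * W1 (u t) a)
    (q2 := fun u => ∏ t, q2 (u t))
    (fun u => by
      simp_rw [← hq2, ← Finset.prod_mul_distrib]
      exact sum_pi_prod fun t a => p2 a * W2 (u t) a)
    (q12 := fun u1 u2 => ∏ t, q12 (u1 t) (u2 t))
    (fun u1 u2 => by
      simp_rw [← hq12, ← Finset.prod_mul_distrib]
      rw [← sum_pi_prod fun t a => ∑ b, P a b * W1 (u1 t) a * W2 (u2 t) b]
      refine Finset.sum_congr rfl fun x1 _ => ?_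
      exact sum_pi_prod fun t b => P (x1 t) b * W1 (u1 t) (x1 t) * W2 (u2 t) b)
    (g := fun u1 x1 x2 u2 => if n * (D1 + η) < ∑ t, f1 (u1 t, x1 t, x2 t, u2 t) ∨
              n * (D2 + η) < ∑ t, f2 (u1 t, x1 t, x2 t, u2 t) then 1 else 0)
    (fun u1 x1 x2 u2 => by split_ifs <;> norm_num)
    (fun u1 x1 x2 u2 => by split_ifs <;> norm_num)
    (T1 := (2 : ℝ) ^ (n * (I1 + ε))) (T2 := (2 : ℝ) ^ (n * (I2 + ε)))
    (T3 := (2 : ℝ) ^ (n * (I12 - ε))) (by positivity) (by positivity) (by positivity)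
  refine ⟨E1, E2, dec1, dec2, hE10, hE11, hE20, hE21, hbound.trans ?_⟩
  clear hbound
  simp_rw [Fintype.card_fin]
  have hdist : ∑ u1 : Fin n → U1, ∑ x1 : Fin n → X1, ∑ x2 : Fin n → X2, ∑ u2 : Fin n → U2,
      (∏ t, P (x1 t) (x2 t)) * (∏ t, W1 (u1 t) (x1 t)) * (∏ t, W2 (u2 t) (x2 t)) *
        (if n * (D1 + η) < ∑ t, f1 (u1 t, x1 t, x2 t, u2 t) ∨
              n * (D2 + η) < ∑ t, f2 (u1 t, x1 t, x2 t, u2 t) then (1 : ℝ) else 0)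
      ≤ Vd1 / (n * η ^ 2) + Vd2 / (n * η ^ 2) := by
    refine le_trans ?_ (add_le_add (hVd1 n η hn hη) (hVd2 n η hn hη))
    rw [← Finset.sum_add_distrib]
    have e : ∀ F : (Fin n → U1) → (Fin n → X1) → (Fin n → X2) → (Fin n → U2) → ℝ,
        ∑ u1, ∑ x1, ∑ x2, ∑ u2, F u1 x1 x2 u2
          = ∑ c : Fin n → U1 × X1 × X2 × U2, F (fun t => (c t).1) (fun t => (c t).2.1)
              (fun t => (c t).2.2.1) (fun t => (c t).2.2.2) := by
      intro F
      simp_rw [sum_pi_prodMk (F _ _)]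
      simp_rw [fun u1 => sum_pi_prodMk (fun x1 (c : Fin n → X2 × U2) =>
        F u1 x1 (fun t => (c t).1) (fun t => (c t).2))]
      rw [sum_pi_prodMk (fun u1 (c : Fin n → X1 × X2 × U2) =>
        F u1 (fun t => (c t).1) (fun t => (c t).2.1) (fun t => (c t).2.2))]
    rw [e]
    refine Finset.sum_le_sum fun c _ => ?_
    rw [← Finset.prod_mul_distrib, ← Finset.prod_mul_distrib, ← mul_add]
    refine mul_le_mul_of_nonneg_left ?_ (Finset.prod_nonneg fun t _ => hQ0 (c t))
    simp only [Prod.mk.eta]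
    by_cases hd1 : n * (D1 + η) < ∑ t, f1 (c t)
    · simp only [hd1, true_or, if_true]
      split_ifs <;> norm_num
    · simp only [hd1, false_or, if_false, zero_add, le_refl]
  have hinfo1 : ∀ b : (Fin n → X1) → (Fin n → U1) → ℝ, (∀ x u, b x u =
      if (2 : ℝ) ^ (n * (I1 + ε)) * ((∏ t, p1 (x t)) * ∏ t, q1 (u t))
        < (∏ t, p1 (x t)) * ∏ t, W1 (u t) (x t) then 1 else 0) →
      ∑ x : Fin n → X1, ∑ u : Fin n → U1,
        (∏ t, p1 (x t)) * (∏ t, W1 (u t) (x t)) * b x u ≤ V1 / (n * ε ^ 2) := by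
    intro b hb
    have := hV1 n ε hn hε b (fun x u => by rw [hb]; split_ifs <;> norm_num)
      (fun x u _ hle => by
        rw [Finset.prod_mul_distrib] at hle
        rw [hb, if_neg (not_lt.2 hle)])
    simpa only [Finset.prod_mul_distrib] using this
  have hinfo2 : ∀ b : (Fin n → X2) → (Fin n → U2) → ℝ, (∀ x u, b x u =
      if (2 : ℝ) ^ (n * (I2 + ε)) * ((∏ t, p2 (x t)) * ∏ t, q2 (u t))
        < (∏ t, p2 (x t)) * ∏ t, W2 (u t) (x t) then 1 else 0) →
      ∑ x : Fin n → X2, ∑ u : Fin n → U2,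
        (∏ t, p2 (x t)) * (∏ t, W2 (u t) (x t)) * b x u ≤ V2 / (n * ε ^ 2) := by
    intro b hb
    have := hV2 n ε hn hε b (fun x u => by rw [hb]; split_ifs <;> norm_num)
      (fun x u _ hle => by
        rw [Finset.prod_mul_distrib] at hle
        rw [hb, if_neg (not_lt.2 hle)])
    simpa only [Finset.prod_mul_distrib] using this
  have hinfo3 : ∀ b : (Fin n → U1) → (Fin n → U2) → ℝ, (∀ u1 u2, b u1 u2 =
      if (2 : ℝ) ^ (n * (I12 - ε)) * ((∏ t, q1 (u1 t)) * ∏ t, q2 (u2 t))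
        < ∏ t, q12 (u1 t) (u2 t) then 0 else 1) →
      ∑ u1 : Fin n → U1, ∑ u2 : Fin n → U2, (∏ t, q12 (u1 t) (u2 t)) * b u1 u2
        ≤ V3 / (n * ε ^ 2) := by
    intro b hb
    exact hV3 n ε hn hε b (fun x u => by rw [hb]; split_ifs <;> norm_num)
      (fun x u hlt _ => by rw [hb, if_pos hlt])
  have hbins : ((⌈(2 : ℝ) ^ (n * (I12 - 2 * ε))⌉₊ : ℝ) - 1) * ((2 : ℝ) ^ (n * (I12 - ε)))⁻¹
      ≤ (2 : ℝ) ^ (-(n * ε)) := by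
    calc _ ≤ (2 : ℝ) ^ (n * (I12 - 2 * ε)) * ((2 : ℝ) ^ (n * (I12 - ε)))⁻¹ := by
          refine mul_le_mul_of_nonneg_right ?_ (by positivity)
          linarith [Nat.ceil_lt_add_one (a := (2 : ℝ) ^ (n * (I12 - 2 * ε))) (by positivity)]
      _ = _ := by
          rw [← Real.rpow_neg (by norm_num), ← Real.rpow_add (by norm_num)]
          congr 1; ring
  have hrate1 : √((2 : ℝ) ^ (n * (I1 + ε)) / ⌈(2 : ℝ) ^ (n * R1)⌉₊)
      ≤ √((2 : ℝ) ^ (-(n * ε))) := by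
    refine Real.sqrt_le_sqrt (two_rpow_div_ceil_le ?_)
    have := mul_le_mul_of_nonneg_left hR1 hn0.le
    linarith
  have hrate2 : √((2 : ℝ) ^ (n * (I2 + ε)) /
        (⌈(2 : ℝ) ^ (n * R2)⌉₊ * ⌈(2 : ℝ) ^ (n * (I12 - 2 * ε))⌉₊))
      ≤ √((2 : ℝ) ^ (-(n * ε))) := by
    refine Real.sqrt_le_sqrt (two_rpow_div_ceil_mul_ceil_le ?_)
    have := mul_le_mul_of_nonneg_left hR2 hn0.le
    linarith
  have hi1 := hinfo1 _ fun x u => rfl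
  have hi2 := hinfo2 _ fun x u => rfl
  have hi3 := hinfo3 _ fun x u => rfl
  have hsplit : (Vd1 + Vd2) / (n * η ^ 2) + (V3 + 2 * V1 + 2 * V2) / (n * ε ^ 2)
      = Vd1 / (n * η ^ 2) + Vd2 / (n * η ^ 2) + V3 / (n * ε ^ 2) + 2 * (V1 / (n * ε ^ 2))
        + 2 * (V2 / (n * ε ^ 2)) := by ring
  rw [hsplit]
  linarith

/-- For a Markov chain `U₁ − X − U₂`, `I(X;U₂|U₁) = I(X;U₂) − I(U₁;U₂)`. -/
lemma condMutInf_eq_sub {X U1 U2 : Type*} [Fintype X] [Fintype U1] [Fintype U2]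
    {r : X → U1 → ℝ} (hr : ∀ x u, 0 ≤ r x u) {W : U2 → X → ℝ} (hW0 : ∀ u x, 0 ≤ W u x)
    (hW1 : ∀ x, ∑ u, W u x = 1) {p : X → ℝ} (hp : ∀ x, ∑ u, r x u = p x)
    {q2 : U2 → ℝ} (hq2 : ∀ u, ∑ x, p x * W u x = q2 u)
    {q12 : U1 → U2 → ℝ} (hq12 : ∀ u1 u2, ∑ x, r x u1 * W u2 x = q12 u1 u2) :
    condMutInf (fun x u2 u1 => r x u1 * W u2 x)
      = mutInf (fun x u => p x * W u x) - mutInf q12 := by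
  obtain ⟨q1, hq1⟩ : ∃ q1 : U1 → ℝ, ∀ u, ∑ x, r x u = q1 u := ⟨_, fun _ => rfl⟩
  have hq12_left : ∀ u1, ∑ u2, q12 u1 u2 = q1 u1 := by
    intro u1
    simp_rw [← hq12, ← hq1]
    rw [Finset.sum_comm]
    simp_rw [← Finset.mul_sum, hW1, mul_one]
  have hq12_right : ∀ u2, ∑ u1, q12 u1 u2 = q2 u2 := by
    intro u2
    simp_rw [← hq12, ← hq2, ← hp, Finset.sum_mul]
    rw [Finset.sum_comm]
  have e1 : mutInf (fun x u => p x * W u x)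
      = ∑ x, ∑ u2, ∑ u1, r x u1 * W u2 x * Real.logb 2 (p x * W u2 x / (p x * q2 u2)) := by
    unfold mutInf
    refine Finset.sum_congr rfl fun x _ => Finset.sum_congr rfl fun u2 _ => ?_
    rw [hq2, ← Finset.mul_sum, hW1, mul_one, ← Finset.sum_mul, ← Finset.sum_mul, hp]
  have e2 : mutInf q12
      = ∑ x, ∑ u2, ∑ u1, r x u1 * W u2 x * Real.logb 2 (q12 u1 u2 / (q1 u1 * q2 u2)) := by
    unfold mutInf
    simp_rw [hq12_left, hq12_right]
    rw [Finset.sum_comm (s := (Finset.univ : Finset X)), Finset.sum_comm]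
    refine Finset.sum_congr rfl fun u2 _ => ?_
    rw [Finset.sum_comm (s := (Finset.univ : Finset X))]
    refine Finset.sum_congr rfl fun u1 _ => ?_
    rw [← Finset.sum_mul, hq12]
  rw [e1, e2]
  unfold condMutInf
  simp_rw [← Finset.sum_sub_distrib]
  refine Finset.sum_congr rfl fun x _ => Finset.sum_congr rfl fun u2 _ =>
    Finset.sum_congr rfl fun u1 _ => ?_
  have hr1 : ∀ u1, ∑ x, ∑ u2, r x u1 * W u2 x = q1 u1 := by
    intro u1
    simp_rw [← Finset.mul_sum, hW1, mul_one, hq1]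
  rw [hr1, hq12, ← Finset.mul_sum, hW1, mul_one]
  rcases (mul_nonneg (hr x u1) (hW0 u2 x)).eq_or_lt with hz | hpos
  · rw [← hz]; ring
  · have hr0 : 0 < r x u1 := pos_of_mul_pos_left hpos (hW0 u2 x)
    have hW' : 0 < W u2 x := pos_of_mul_pos_right hpos (hr x u1)
    have hp0 : 0 < p x := hr0.trans_le <| hp x ▸
      Finset.single_le_sum (f := fun u => r x u) (fun u _ => hr x u) (Finset.mem_univ u1)
    have hq10 : 0 < q1 u1 := hr0.trans_le <| hq1 u1 ▸
      Finset.single_le_sum (f := fun y => r y u1) (fun y _ => hr y u1) (Finset.mem_univ x)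
    have hq120 : 0 < q12 u1 u2 := hpos.trans_le <| hq12 u1 u2 ▸
      Finset.single_le_sum (f := fun y => r y u1 * W u2 y)
        (fun y _ => mul_nonneg (hr y u1) (hW0 u2 y)) (Finset.mem_univ x)
    have hq20 : 0 < q2 u2 := hq120.trans_le <| hq12_right u2 ▸
      Finset.single_le_sum (f := fun v => q12 v u2)
        (fun v _ => hq12 v u2 ▸ Finset.sum_nonneg fun y _ => mul_nonneg (hr y v) (hW0 u2 y))
        (Finset.mem_univ u1)
    rw [← mul_sub, ← Real.logb_div (by positivity) (by positivity)]
    congr 2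
    field_simp

lemma code_expectation_le {A1 A2 μ1 μ2 : Type*} [Fintype A1] [Fintype A2] [Fintype μ1]
    [Fintype μ2] {P : A1 → A2 → ℝ} (hP : ∀ x1 x2, 0 ≤ P x1 x2) (hP1 : ∑ x1, ∑ x2, P x1 x2 = 1)
    {E1 : A1 → μ1 → ℝ} (hE10 : ∀ x m, 0 ≤ E1 x m) (hE11 : ∀ x, ∑ m, E1 x m = 1)
    {E2 : A2 → μ2 → ℝ} (hE20 : ∀ x m, 0 ≤ E2 x m) (hE21 : ∀ x, ∑ m, E2 x m = 1)
    {F G : A1 → A2 → μ1 → μ2 → ℝ} {a K : ℝ}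
    (h : ∀ x1 x2 m1 m2, F x1 x2 m1 m2 ≤ a + K * G x1 x2 m1 m2) :
    ∑ x1, ∑ x2, P x1 x2 * ∑ m1, ∑ m2, E1 x1 m1 * E2 x2 m2 * F x1 x2 m1 m2
      ≤ a + K * ∑ x1, ∑ x2, P x1 x2 * ∑ m1, ∑ m2, E1 x1 m1 * E2 x2 m2 * G x1 x2 m1 m2 := by
  calc _ ≤ ∑ x1, ∑ x2, P x1 x2 * ∑ m1, ∑ m2, E1 x1 m1 * E2 x2 m2 * (a + K * G x1 x2 m1 m2) :=
        Finset.sum_le_sum fun x1 _ => Finset.sum_le_sum fun x2 _ =>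
          mul_le_mul_of_nonneg_left (Finset.sum_le_sum fun m1 _ => Finset.sum_le_sum fun m2 _ =>
            mul_le_mul_of_nonneg_left (h x1 x2 m1 m2) (mul_nonneg (hE10 _ _) (hE20 _ _)))
            (hP x1 x2)
    _ = ∑ x1, ∑ x2, (P x1 x2 * a
          + K * (P x1 x2 * ∑ m1, ∑ m2, E1 x1 m1 * E2 x2 m2 * G x1 x2 m1 m2)) := by
        refine Finset.sum_congr rfl fun x1 _ => Finset.sum_congr rfl fun x2 _ => ?_
        have e1 : ∑ m1, ∑ m2, E1 x1 m1 * E2 x2 m2 * a = a := by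
          simp_rw [← Finset.sum_mul, ← Finset.mul_sum, hE21, mul_one]
          rw [hE11, one_mul]
        have e2 : ∑ m1, ∑ m2, E1 x1 m1 * E2 x2 m2 * (K * G x1 x2 m1 m2)
            = K * ∑ m1, ∑ m2, E1 x1 m1 * E2 x2 m2 * G x1 x2 m1 m2 := by
          simp_rw [Finset.mul_sum]
          exact Finset.sum_congr rfl fun m1 _ => Finset.sum_congr rfl fun m2 _ => by ring
        simp_rw [mul_add (E1 _ _ * E2 _ _), Finset.sum_add_distrib, e1, e2]
        ring
    _ = _ := by
        simp_rw [Finset.sum_add_distrib, ← Finset.sum_mul, ← Finset.mul_sum, hP1, one_mul]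

lemma limsup_le_of_le_add {u δ : ℕ → ℝ} {D : ℝ} (hu : ∀ n, 0 ≤ u n)
    (h : ∀ n, 1 ≤ n → u n ≤ D + δ n) (hδ : Filter.Tendsto δ Filter.atTop (nhds 0)) :
    Filter.atTop.limsup u ≤ D := by
  have ht : Filter.Tendsto (fun n => D + δ n) Filter.atTop (nhds D) := by
    simpa using hδ.const_add D
  rw [← ht.limsup_eq]
  refine Filter.limsup_le_limsup (Filter.eventually_atTop.2 ⟨1, h⟩) ?_ ht.isBoundedUnder_le
  exact Filter.isCoboundedUnder_le_of_le Filter.atTop (x := 0) hu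

/-- Outside a bad event the average distortion is at most `a`; it is always bounded. -/
lemma average_distortion_le {X Y : Type*} [Fintype X] [Fintype Y] {d : X → Y → ℝ}
    (hd : ∀ x y, 0 ≤ d x y) {n : ℕ} (hn : 1 ≤ n) {a : ℝ} (ha : 0 ≤ a) (x : Fin n → X)
    (y : Fin n → Y) {bad : Prop} [Decidable bad] (hbad : n * a < ∑ t, d (x t) (y t) → bad) :
    (n : ℝ)⁻¹ * ∑ t, d (x t) (y t) ≤ a + (∑ x, ∑ y, d x y) * (if bad then 1 else 0) := by
  have hn0 : (0 : ℝ) < n := by exact_mod_cast hn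
  rw [inv_mul_le_iff₀ hn0]
  split_ifs with hb
  · have hK : ∀ t, d (x t) (y t) ≤ ∑ x, ∑ y, d x y := fun t =>
      (Finset.single_le_sum (f := fun y => d (x t) y) (fun y _ => hd _ y)
        (Finset.mem_univ (y t))).trans
      (Finset.single_le_sum (f := fun x => ∑ y, d x y)
        (fun x _ => Finset.sum_nonneg fun y _ => hd x y) (Finset.mem_univ (x t)))
    calc ∑ t, d (x t) (y t) ≤ ∑ _t : Fin n, ∑ x, ∑ y, d x y := Finset.sum_le_sum fun t _ => hK t
      _ = n * ∑ x, ∑ y, d x y := by simp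
      _ ≤ _ := by
        rw [mul_one]
        exact mul_le_mul_of_nonneg_left (by linarith) hn0.le
  · rw [mul_zero, add_zero]
    exact not_lt.1 fun hlt => hb (hbad hlt)

lemma tendsto_block_error (V V' : ℝ) {ε : ℝ} (hε : 0 < ε) :
    Filter.Tendsto (fun n : ℕ => V / (n * ((√(√(n : ℝ)))⁻¹) ^ 2) + V' / (n * ε ^ 2)
      + (2 : ℝ) ^ (-(n * ε)) + 2 * √((2 : ℝ) ^ (-(n * ε)))) Filter.atTop (nhds 0) := by
  have hcast : Filter.Tendsto (fun n : ℕ => (n : ℝ)) Filter.atTop Filter.atTop :=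
    tendsto_natCast_atTop_atTop
  have hsqrt : Filter.Tendsto (fun n : ℕ => √(n : ℝ)) Filter.atTop Filter.atTop :=
    Real.tendsto_sqrt_atTop.comp hcast
  have t1 : Filter.Tendsto (fun n : ℕ => V / (n * ((√(√(n : ℝ)))⁻¹) ^ 2)) Filter.atTop
      (nhds 0) := by
    have e : ∀ n : ℕ, (n : ℝ) * ((√(√(n : ℝ)))⁻¹) ^ 2 = √(n : ℝ) := by
      intro n
      rw [inv_pow, Real.sq_sqrt (Real.sqrt_nonneg _), ← div_eq_mul_inv, Real.div_sqrt]
    simp_rw [e]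
    exact hsqrt.const_div_atTop V
  have t2 : Filter.Tendsto (fun n : ℕ => V' / (n * ε ^ 2)) Filter.atTop (nhds 0) :=
    (hcast.atTop_mul_const (by positivity)).const_div_atTop V'
  have t3 : Filter.Tendsto (fun n : ℕ => (2 : ℝ) ^ (-(n * ε))) Filter.atTop (nhds 0) := by
    have hr : (2 : ℝ) ^ (-ε) < 1 := Real.rpow_lt_one_of_one_lt_of_neg (by norm_num) (by linarith)
    refine (tendsto_pow_atTop_nhds_zero_of_lt_one (by positivity) hr).congr fun n => ?_
    rw [← Real.rpow_natCast, ← Real.rpow_mul (by norm_num)]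
    congr 1; ring
  have t4 : Filter.Tendsto (fun n : ℕ => 2 * √((2 : ℝ) ^ (-(n * ε)))) Filter.atTop (nhds 0) := by
    simpa using (t3.sqrt).const_mul 2
  simpa using ((t1.add t2).add t3).add t4

end BergerTung

/-- Berger–Tung corner point achievability: Let `P̄_{X₁X₂}` be a
joint source pmf on the finite set `X₁ × X₂`, `P̄_{U₁|X₁}`, `P̄_{U₂|X₂}`
conditional pmfs (so `U₁ − X₁ − X₂ − U₂` is Markov under
`P̄(u₁,x₁,x₂,u₂) = P̄_{X₁X₂}(x₁,x₂) P̄_{U₁|X₁}(u₁|x₁) P̄_{U₂|X₂}(u₂|x₂)`), and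
`φ_k : U₁ × U₂ → Y_k` reconstruction functions with
`E_{P̄}[d_k(X_k, φ_k(U₁,U₂))] ≤ D_k` for `k = 1,2`.  Then any rate pair with
`R₁ > I(X₁;U₁)` and `R₂ > I(X₂;U₂|U₁)` is achievable under distortions
`(D₁,D₂)`: there are message sets of sizes `≤ ⌈2^{nR₁}⌉` and `≤ ⌈2^{nR₂}⌉`,
separate stochastic encoders and a joint stochastic decoder (Markov kernels)
with `limsup_n E[(1/n) ∑ₜ d_k(X_{k,t}, Y_{k,t})] ≤ D_k`, `k = 1,2`, for the
i.i.d. sources `(X₁ₜ, X₂ₜ) ∼ P̄_{X₁X₂}`. -/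
theorem berger_tung_corner_point_achievability
    {X1 X2 U1 U2 Y1 Y2 : Type*}
    [Fintype X1] [Fintype X2] [Fintype U1] [Fintype U2] [Fintype Y1] [Fintype Y2]
    (Px : X1 × X2 → ℝ)
    (hPx0 : ∀ p, 0 ≤ Px p) (hPx1 : ∑ p, Px p = 1)
    (W1 : U1 → X1 → ℝ) (hW10 : ∀ u x, 0 ≤ W1 u x) (hW11 : ∀ x, ∑ u, W1 u x = 1)
    (W2 : U2 → X2 → ℝ) (hW20 : ∀ u x, 0 ≤ W2 u x) (hW21 : ∀ x, ∑ u, W2 u x = 1)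
    (d1 : X1 → Y1 → ℝ) (hd1 : ∀ x y, 0 ≤ d1 x y)
    (d2 : X2 → Y2 → ℝ) (hd2 : ∀ x y, 0 ≤ d2 x y)
    (φ1 : U1 → U2 → Y1) (φ2 : U1 → U2 → Y2)
    (D1 D2 : ℝ)
    (hD1 : ∑ u1, ∑ x1, ∑ x2, ∑ u2,
        Px (x1, x2) * W1 u1 x1 * W2 u2 x2 * d1 x1 (φ1 u1 u2) ≤ D1)
    (hD2 : ∑ u1, ∑ x1, ∑ x2, ∑ u2,
        Px (x1, x2) * W1 u1 x1 * W2 u2 x2 * d2 x2 (φ2 u1 u2) ≤ D2)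
    (R1 R2 : ℝ)
    (hR1 : R1 > mutInf (fun x1 u1 =>
        ∑ x2, ∑ u2, Px (x1, x2) * W1 u1 x1 * W2 u2 x2))
    (hR2 : R2 > condMutInf (fun x2 u2 u1 =>
        ∑ x1, Px (x1, x2) * W1 u1 x1 * W2 u2 x2)) :
    ∃ M1 M2 : ℕ → ℕ,
      (∀ n, M1 n ≤ Nat.ceil ((2 : ℝ) ^ ((n : ℝ) * R1))) ∧
      (∀ n, M2 n ≤ Nat.ceil ((2 : ℝ) ^ ((n : ℝ) * R2))) ∧
      ∃ (enc1 : ∀ n : ℕ, (Fin n → X1) → Fin (M1 n) → ℝ)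
        (enc2 : ∀ n : ℕ, (Fin n → X2) → Fin (M2 n) → ℝ)
        (dec : ∀ n : ℕ, Fin (M1 n) → Fin (M2 n) →
          ((Fin n → Y1) × (Fin n → Y2)) → ℝ),
        (∀ n x1n, (∀ m1, 0 ≤ enc1 n x1n m1) ∧ ∑ m1, enc1 n x1n m1 = 1) ∧
        (∀ n x2n, (∀ m2, 0 ≤ enc2 n x2n m2) ∧ ∑ m2, enc2 n x2n m2 = 1) ∧
        (∀ n m1 m2, (∀ y, 0 ≤ dec n m1 m2 y) ∧ ∑ y, dec n m1 m2 y = 1) ∧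
        Filter.atTop.limsup
          (fun n : ℕ =>
            ∑ x1n : Fin n → X1, ∑ x2n : Fin n → X2,
              (∏ t, Px (x1n t, x2n t)) *
                ∑ m1, ∑ m2, enc1 n x1n m1 * enc2 n x2n m2 *
                  ∑ y : (Fin n → Y1) × (Fin n → Y2), dec n m1 m2 y *
                    ((n : ℝ)⁻¹ * ∑ t, d1 (x1n t) (y.1 t)))
          ≤ D1 ∧
        Filter.atTop.limsup
          (fun n : ℕ =>
            ∑ x1n : Fin n → X1, ∑ x2n : Fin n → X2,
              (∏ t, Px (x1n t, x2n t)) *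
                ∑ m1, ∑ m2, enc1 n x1n m1 * enc2 n x2n m2 *
                  ∑ y : (Fin n → Y1) × (Fin n → Y2), dec n m1 m2 y *
                    ((n : ℝ)⁻¹ * ∑ t, d2 (x2n t) (y.2 t)))
          ≤ D2 := by
  classical
  obtain ⟨P, hPdef⟩ : ∃ P : X1 → X2 → ℝ, P = fun x1 x2 => Px (x1, x2) := ⟨_, rfl⟩
  have hPapp : ∀ x1 x2, Px (x1, x2) = P x1 x2 := fun x1 x2 => by rw [hPdef]
  simp_rw [hPapp] at hD1 hD2 hR1 hR2 ⊢
  have hP : ∀ x1 x2, 0 ≤ P x1 x2 := fun x1 x2 => hPapp x1 x2 ▸ hPx0 _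
  obtain ⟨p1, hp1⟩ : ∃ p1 : X1 → ℝ, ∀ x1, ∑ x2, P x1 x2 = p1 x1 := ⟨_, fun _ => rfl⟩
  obtain ⟨p2, hp2⟩ : ∃ p2 : X2 → ℝ, ∀ x2, ∑ x1, P x1 x2 = p2 x2 := ⟨_, fun _ => rfl⟩
  obtain ⟨q1, hq1⟩ : ∃ q1 : U1 → ℝ, ∀ u, ∑ x, p1 x * W1 u x = q1 u := ⟨_, fun _ => rfl⟩
  obtain ⟨q2, hq2⟩ : ∃ q2 : U2 → ℝ, ∀ u, ∑ x, p2 x * W2 u x = q2 u := ⟨_, fun _ => rfl⟩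
  obtain ⟨q12, hq12⟩ : ∃ q12 : U1 → U2 → ℝ,
      ∀ u1 u2, ∑ x1, ∑ x2, P x1 x2 * W1 u1 x1 * W2 u2 x2 = q12 u1 u2 := ⟨_, fun _ _ => rfl⟩
  have hp1_sum : ∑ x1, p1 x1 = 1 := by
    simp_rw [← hp1, ← hPapp]
    rw [← hPx1, Fintype.sum_prod_type]
  have hI1 : mutInf (fun x1 u1 => ∑ x2, ∑ u2, P x1 x2 * W1 u1 x1 * W2 u2 x2)
      = mutInf (fun x u => p1 x * W1 u x) := by
    congr 1
    funext x1 u1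
    simp_rw [← Finset.mul_sum, hW21, mul_one, ← Finset.sum_mul, hp1]
  have hI2 : condMutInf (fun x2 u2 u1 => ∑ x1, P x1 x2 * W1 u1 x1 * W2 u2 x2)
      = mutInf (fun x u => p2 x * W2 u x) - mutInf q12 := by
    simp_rw [← Finset.sum_mul]
    refine BergerTung.condMutInf_eq_sub (r := fun x2 u1 => ∑ x1, P x1 x2 * W1 u1 x1)
      (fun x2 u1 => Finset.sum_nonneg fun x1 _ => mul_nonneg (hP _ _) (hW10 _ _)) hW20 hW21
      (fun x2 => ?_) hq2 (fun u1 u2 => ?_)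
    · rw [Finset.sum_comm, ← hp2]
      simp_rw [← Finset.mul_sum, hW11, mul_one]
    · simp_rw [Finset.sum_mul]
      rw [Finset.sum_comm, hq12]
  rw [hI1] at hR1
  rw [hI2] at hR2
  obtain ⟨ε, hε, hεR1, hεR2⟩ : ∃ ε : ℝ, 0 < ε ∧
      mutInf (fun x u => p1 x * W1 u x) + 2 * ε ≤ R1 ∧
      mutInf (fun x u => p2 x * W2 u x) - mutInf q12 + 4 * ε ≤ R2 := by
    refine ⟨min (R1 - mutInf (fun x u => p1 x * W1 u x))
      (R2 - (mutInf (fun x u => p2 x * W2 u x) - mutInf q12)) / 4,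
      div_pos (lt_min (by linarith) (by linarith)) (by norm_num), ?_, ?_⟩
    · have := min_le_left (R1 - mutInf (fun x u => p1 x * W1 u x))
        (R2 - (mutInf (fun x u => p2 x * W2 u x) - mutInf q12))
      linarith
    · have := min_le_right (R1 - mutInf (fun x u => p1 x * W1 u x))
        (R2 - (mutInf (fun x u => p2 x * W2 u x) - mutInf q12))
      linarith
  have hQ0 : ∀ u1 x1 x2 u2, 0 ≤ P x1 x2 * W1 u1 x1 * W2 u2 x2 := fun u1 x1 x2 u2 =>
    mul_nonneg (mul_nonneg (hP _ _) (hW10 _ _)) (hW20 _ _)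
  have hD10 : 0 ≤ D1 := le_trans (Finset.sum_nonneg fun u1 _ => Finset.sum_nonneg fun x1 _ =>
    Finset.sum_nonneg fun x2 _ => Finset.sum_nonneg fun u2 _ =>
      mul_nonneg (hQ0 u1 x1 x2 u2) (hd1 _ _)) hD1
  have hD20 : 0 ≤ D2 := le_trans (Finset.sum_nonneg fun u1 _ => Finset.sum_nonneg fun x1 _ =>
    Finset.sum_nonneg fun x2 _ => Finset.sum_nonneg fun u2 _ =>
      mul_nonneg (hQ0 u1 x1 x2 u2) (hd2 _ _)) hD2
  obtain ⟨V, V', hcode⟩ := BergerTung.exists_block_code hP hp1 hp1_sum hp2 hW10 hW11 hW20 hW21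
    hq1 hq2 hq12 (fun a => d1 a.2.1 (φ1 a.1 a.2.2.2)) (fun a => d2 a.2.2.1 (φ2 a.1 a.2.2.2))
    (D1 := D1) (D2 := D2) (by simpa only [Fintype.sum_prod_type] using hD1)
    (by simpa only [Fintype.sum_prod_type] using hD2) hε hεR1 hεR2
  set η : ℕ → ℝ := fun n => (√(√(n : ℝ)))⁻¹ with hη
  set err : ℕ → ℝ := fun n => V / (n * η n ^ 2) + V' / (n * ε ^ 2)
    + (2 : ℝ) ^ (-(n * ε)) + 2 * √((2 : ℝ) ^ (-(n * ε)))
  have herr_tendsto : Filter.Tendsto err Filter.atTop (nhds 0) :=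
    BergerTung.tendsto_block_error V V' hε
  have hη_tendsto : Filter.Tendsto η Filter.atTop (nhds 0) :=
    (Real.tendsto_sqrt_atTop.comp
      (Real.tendsto_sqrt_atTop.comp tendsto_natCast_atTop_atTop)).inv_tendsto_atTop
  have hcodes : ∀ n : ℕ, ∃ (E1 : (Fin n → X1) → Fin ⌈(2 : ℝ) ^ (n * R1)⌉₊ → ℝ)
      (E2 : (Fin n → X2) → Fin ⌈(2 : ℝ) ^ (n * R2)⌉₊ → ℝ)
      (y : Fin ⌈(2 : ℝ) ^ (n * R1)⌉₊ → Fin ⌈(2 : ℝ) ^ (n * R2)⌉₊ →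
        (Fin n → Y1) × (Fin n → Y2)),
      ((∀ x m, 0 ≤ E1 x m) ∧ (∀ x, ∑ m, E1 x m = 1) ∧
      (∀ x m, 0 ≤ E2 x m) ∧ (∀ x, ∑ m, E2 x m = 1)) ∧ (1 ≤ n →
      ∑ x1 : Fin n → X1, ∑ x2 : Fin n → X2, (∏ t, P (x1 t) (x2 t)) * ∑ m1, ∑ m2,
          E1 x1 m1 * E2 x2 m2 * ((n : ℝ)⁻¹ * ∑ t, d1 (x1 t) ((y m1 m2).1 t))
        ≤ D1 + (η n + (∑ x, ∑ y, d1 x y) * err n)) ∧ (1 ≤ n →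
      ∑ x1 : Fin n → X1, ∑ x2 : Fin n → X2, (∏ t, P (x1 t) (x2 t)) * ∑ m1, ∑ m2,
          E1 x1 m1 * E2 x2 m2 * ((n : ℝ)⁻¹ * ∑ t, d2 (x2 t) ((y m1 m2).2 t))
        ≤ D2 + (η n + (∑ x, ∑ y, d2 x y) * err n)) := by
    intro n
    rcases Nat.eq_zero_or_pos n with rfl | hn
    · have hone : ∀ R : ℝ, ⌈(2 : ℝ) ^ (((0 : ℕ) : ℝ) * R)⌉₊ = 1 := fun R => by simp
      refine ⟨fun _ _ => 1, fun _ _ => 1, fun _ _ => (Fin.elim0, Fin.elim0), ⟨?_, ?_, ?_, ?_⟩,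
        fun h => absurd h (by norm_num), fun h => absurd h (by norm_num)⟩
      · intros; exact zero_le_one
      · intro x
        rw [Finset.sum_const, Finset.card_univ, Fintype.card_fin, hone, one_smul]
      · intros; exact zero_le_one
      · intro x
        rw [Finset.sum_const, Finset.card_univ, Fintype.card_fin, hone, one_smul]
    · have hn0 : (0 : ℝ) < n := by exact_mod_cast hn
      have hηpos : 0 < η n := by simp only [hη]; positivity
      obtain ⟨E1, E2, dec1, dec2, hE10, hE11, hE20, hE21, hbad⟩ := hcode n (η n) hn hηpos
      have hPn : ∀ (x1 : Fin n → X1) (x2 : Fin n → X2), 0 ≤ ∏ t, P (x1 t) (x2 t) :=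
        fun x1 x2 => Finset.prod_nonneg fun t _ => hP _ _
      have hPn1 : ∑ x1 : Fin n → X1, ∑ x2 : Fin n → X2, ∏ t, P (x1 t) (x2 t) = 1 := by
        rw [← BergerTung.sum_iid (ι := Fin n) hp1_sum]
        refine Finset.sum_congr rfl fun x1 _ => ?_
        simp_rw [← hp1]
        exact BergerTung.sum_pi_prod fun t a => P (x1 t) a
      refine ⟨E1, E2, fun m1 m2 => (fun t => φ1 (dec1 m1 t) (dec2 (dec1 m1) m2 t),
        fun t => φ2 (dec1 m1 t) (dec2 (dec1 m1) m2 t)), ⟨hE10, hE11, hE20, hE21⟩,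
        fun _ => ?_, fun _ => ?_⟩
      · rw [← add_assoc]
        refine (BergerTung.code_expectation_le hPn hPn1 hE10 hE11 hE20 hE21
          (fun x1 x2 m1 m2 => BergerTung.average_distortion_le hd1 hn (add_nonneg hD10 hηpos.le)
            x1 _ Or.inl)).trans (add_le_add le_rfl (mul_le_mul_of_nonneg_left hbad
              (Finset.sum_nonneg fun x _ => Finset.sum_nonneg fun y _ => hd1 x y)))
      · rw [← add_assoc]
        refine (BergerTung.code_expectation_le hPn hPn1 hE10 hE11 hE20 hE21
          (fun x1 x2 m1 m2 => BergerTung.average_distortion_le hd2 hn (add_nonneg hD20 hηpos.le)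
            x2 _ Or.inr)).trans (add_le_add le_rfl (mul_le_mul_of_nonneg_left hbad
              (Finset.sum_nonneg fun x _ => Finset.sum_nonneg fun y _ => hd2 x y)))
  choose E1 E2 y hE hdist1 hdist2 using hcodes
  refine ⟨fun n => ⌈(2 : ℝ) ^ (n * R1)⌉₊, fun n => ⌈(2 : ℝ) ^ (n * R2)⌉₊, fun n => le_rfl,
    fun n => le_rfl, E1, E2, fun n m1 m2 z => if z = y n m1 m2 then 1 else 0,
    fun n x => ⟨(hE n).1 x, (hE n).2.1 x⟩, fun n x => ⟨(hE n).2.2.1 x, (hE n).2.2.2 x⟩,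
    fun n m1 m2 => ⟨fun z => by dsimp only; split_ifs <;> norm_num, by simp⟩, ?_, ?_⟩
  · simp only [ite_mul, one_mul, zero_mul, Finset.sum_ite_eq',
      Finset.mem_univ, if_true]
    refine BergerTung.limsup_le_of_le_add (fun n => ?_) hdist1 ?_
    · exact Finset.sum_nonneg fun x1 _ => Finset.sum_nonneg fun x2 _ =>
        mul_nonneg (Finset.prod_nonneg fun t _ => hP _ _) <|
        Finset.sum_nonneg fun m1 _ => Finset.sum_nonneg fun m2 _ =>
        mul_nonneg (mul_nonneg ((hE n).1 _ _) ((hE n).2.2.1 _ _)) <|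
        mul_nonneg (by positivity) (Finset.sum_nonneg fun t _ => hd1 _ _)
    · simpa using hη_tendsto.add (herr_tendsto.const_mul (∑ x, ∑ y, d1 x y))
  · simp only [ite_mul, one_mul, zero_mul, Finset.sum_ite_eq',
      Finset.mem_univ, if_true]
    refine BergerTung.limsup_le_of_le_add (fun n => ?_) hdist2 ?_
    · exact Finset.sum_nonneg fun x1 _ => Finset.sum_nonneg fun x2 _ =>
        mul_nonneg (Finset.prod_nonneg fun t _ => hP _ _) <|
        Finset.sum_nonneg fun m1 _ => Finset.sum_nonneg fun m2 _ =>
        mul_nonneg (mul_nonneg ((hE n).1 _ _) ((hE n).2.2.1 _ _)) <|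
        mul_nonneg (by positivity) (Finset.sum_nonneg fun t _ => hd2 _ _)
    · simpa using hη_tendsto.add (herr_tendsto.const_mul (∑ x, ∑ y, d2 x y))
end
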